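/- arXiv:2005.01700 — 2 statements merged into one kernel-verified Lean document; each statement's English description precedes it below -/
import Mathlib

section
/- Under the standing assumptions, let ℓ = ⌈log₂ λ⌉, and let x ∈ X and r > 0 be such that the closed ball B̄_d(x,(2λ)⁷r) is compact and contained in a topological disk U ⊂ X. Then there exists a continuum K ⊂ B̄_d(x,(2λ)⁶r) ∖ B_d(x,2λr) which separates B_d(x,r) from X ∖ B̄_d(x,(2λ)⁷r) and satisfies diam_q(K) ≤ 8 C_W C_D^{12+4ℓ} μ(B_d(x,r))^{1/2}, where diam_q(A) = sup_{a,b∈A} q(a,b). -/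
open Metric MeasureTheory Set Filter Topology UniformSpace ENNReal
open scoped NNReal

noncomputable section

/-- The set `B_{xy} = B(x, d(x,y)) ∪ B(y, d(x,y))`. -/
def pairBall {X : Type*} [MetricSpace X] (x y : X) : Set X :=
  Metric.ball x (dist x y) ∪ Metric.ball y (dist x y)

/-- A `δ`-chain from `x` to `y`: a finite sequence `z 0 = x, …, z m = y` with
consecutive distances at most `δ`. -/
def IsDeltaChain {X : Type*} [MetricSpace X] (δ : ℝ) (x y : X) (z : ℕ → X) (m : ℕ) : Prop :=
  z 0 = x ∧ z m = y ∧ ∀ j < m, dist (z j) (z (j + 1)) ≤ δ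

/-- `q^δ_{μ,s}(x,y)`: infimum of `∑ μ(B_{x_j x_{j-1}})^{1/s}` over `δ`-chains from `x` to `y`. -/
def qDelta {X : Type*} [MetricSpace X] [MeasurableSpace X]
    (μ : Measure X) (s δ : ℝ) (x y : X) : ℝ≥0∞ :=
  ⨅ (m : ℕ) (z : ℕ → X) (_ : IsDeltaChain δ x y z m),
    ∑ j ∈ Finset.range m, μ (pairBall (z j) (z (j + 1))) ^ (1 / s)

/-- `q_{μ,s}(x,y) = limsup_{δ → 0⁺} q^δ_{μ,s}(x,y)`. -/
def qmu {X : Type*} [MetricSpace X] [MeasurableSpace X]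
    (μ : Measure X) (s : ℝ) (x y : X) : ℝ≥0∞ :=
  Filter.limsup (fun δ => qDelta μ s δ x y) (nhdsWithin (0 : ℝ) (Set.Ioi 0))

/-- `μ` is a doubling measure with constant `CD`: balls have positive finite measure and
`μ(B(x,2r)) ≤ CD · μ(B(x,r))`. -/
def IsDoublingWith {X : Type*} [MetricSpace X] [MeasurableSpace X]
    (μ : Measure X) (CD : ℝ≥0) : Prop :=
  (∀ (x : X) (r : ℝ), 0 < r → 0 < μ (Metric.ball x r) ∧ μ (Metric.ball x r) < ⊤) ∧
    ∀ (x : X) (r : ℝ), 0 < r → μ (Metric.ball x (2 * r)) ≤ CD * μ (Metric.ball x r)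

/-- `μ` is a `CW`-weak metric doubling measure of dimension `s`:
`μ(B_{xy})^{1/s} ≤ CW · q_{μ,s}(x,y)` for all `x, y`. -/
def IsWMDM {X : Type*} [MetricSpace X] [MeasurableSpace X]
    (μ : Measure X) (s : ℝ) (CW : ℝ≥0) : Prop :=
  ∀ x y : X, μ (pairBall x y) ^ (1 / s) ≤ CW * qmu μ s x y

/-- A continuum is a compact connected set. -/
def IsContinuum {X : Type*} [TopologicalSpace X] (K : Set X) : Prop :=
  IsCompact K ∧ IsConnected K

/-- `X` is `λ`-linearly locally connected. -/
def IsLLC (X : Type*) [MetricSpace X] (lam : ℝ) : Prop :=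
  ∀ (x : X) (r : ℝ), 0 < r →
    (∀ y ∈ Metric.ball x r, ∀ z ∈ Metric.ball x r,
      ∃ K : Set X, IsContinuum K ∧ K ⊆ Metric.ball x (lam * r) ∧ y ∈ K ∧ z ∈ K) ∧
    (∀ y z : X, y ∉ Metric.ball x r → z ∉ Metric.ball x r →
      ∃ K : Set X, IsContinuum K ∧ K ⊆ (Metric.ball x (r / lam))ᶜ ∧ y ∈ K ∧ z ∈ K)

/-- The sphere `S²`, with the metric inherited from `ℝ³`. -/
abbrev Sphere2 : Set (EuclideanSpace ℝ (Fin 3)) := Metric.sphere 0 1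

/-- A circle domain in `S²`: an open connected set each of whose complementary
connected components is a point or a round closed disk (a closed metric ball). -/
def IsCircleDomainS2 (Ω : Set ↥Sphere2) : Prop :=
  IsOpen Ω ∧ IsConnected Ω ∧ ∀ p ∈ Ωᶜ,
    connectedComponentIn Ωᶜ p = {p} ∨
      ∃ (c : ↥Sphere2) (ρ : ℝ), 0 < ρ ∧ connectedComponentIn Ωᶜ p = Metric.closedBall c ρ

/-- A circle domain in the plane. -/
def IsCircleDomainC (Ω : Set ℂ) : Prop :=
  IsOpen Ω ∧ IsConnected Ω ∧ ∀ p ∈ Ωᶜ,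
    connectedComponentIn Ωᶜ p = {p} ∨
      ∃ (c : ℂ) (ρ : ℝ), 0 < ρ ∧ connectedComponentIn Ωᶜ p = Metric.closedBall c ρ

/-- The residual set `X̄ ∖ X` inside the completion of `X`. -/
def resid (X : Type*) [MetricSpace X] : Set (Completion X) :=
  (Set.range ((↑) : X → Completion X))ᶜ

/-- The collection of connected components of `X̄ ∖ X`. -/
def residComps (X : Type*) [MetricSpace X] : Set (Set (Completion X)) :=
  {C | ∃ p ∈ resid X, C = connectedComponentIn (resid X) p}

/-- Distance between two sets. -/
def setSetDist {Z : Type*} [MetricSpace Z] (A B : Set Z) : ℝ :=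
  sInf (Set.image2 dist A B)

/-- `f` is `η`-quasisymmetric, for a homeomorphism `η` of `[0,∞)`. -/
def IsQSWith {X Y : Type*} [MetricSpace X] [MetricSpace Y]
    (η : ℝ≥0 ≃ₜ ℝ≥0) (f : X → Y) : Prop :=
  ∀ x y z : X, x ≠ z →
    nndist (f x) (f y) ≤ η (nndist x y / nndist x z) * nndist (f x) (f z)

/-- `ℓ = ⌈log₂ λ⌉`. -/
def ellOf (lam : ℝ) : ℕ := (Int.ceil (Real.logb 2 lam)).toNat

/-- The constant `C_S = 16 C_W C_D^{28+16⌈log₂ λ⌉}`. -/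
def CSconst (lam : ℝ) (CD CW : ℝ≥0) : ℝ≥0∞ :=
  16 * (CW : ℝ≥0∞) * (CD : ℝ≥0∞) ^ (28 + 16 * ellOf lam)

/-- `K` separates `A` and `B`: `A` and `B` lie in different components of the complement of `K`. -/
def SeparatesSets {X : Type*} [TopologicalSpace X] (K A B : Set X) : Prop :=
  A ⊆ Kᶜ ∧ B ⊆ Kᶜ ∧
    ∀ p ∈ A, ∀ p' ∈ B, connectedComponentIn Kᶜ p ≠ connectedComponentIn Kᶜ p'

/-- A topological disk: a set homeomorphic to an open disk in the plane. -/
def IsTopDisk {X : Type*} [TopologicalSpace X] (U : Set X) : Prop :=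
  Nonempty (↥U ≃ₜ ↥(Metric.ball (0 : ℂ) 1))

/-- Lower line integral `∫_γ ρ ds` over `γ : [a,b] → Y`, as a supremum of lower sums
over partitions of `[a,b]`. -/
def lowerLineIntegral {Y : Type*} [PseudoEMetricSpace Y]
    (ρ : Y → ℝ≥0∞) (γ : ℝ → Y) (a b : ℝ) : ℝ≥0∞ :=
  ⨆ (n : ℕ) (t : ℕ → ℝ) (_ : t 0 = a) (_ : t n = b) (_ : ∀ j < n, t j ≤ t (j + 1)),
    ∑ j ∈ Finset.range n,
      (⨅ u ∈ Set.Icc (t j) (t (j + 1)), ρ (γ u)) * edist (γ (t j)) (γ (t (j + 1)))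

/-- `γ` (with parameter interval `[0,1]`) is locally rectifiable on the open interval `(0,1)`. -/
def LocRectifiableOn {Y : Type*} [PseudoEMetricSpace Y] (γ : ℝ → Y) : Prop :=
  ∀ c d : ℝ, 0 < c → c ≤ d → d < 1 → eVariationOn γ (Set.Icc c d) < ⊤

/-- The line integral of `ρ` over the open part of `γ`. -/
def openLineIntegral {Y : Type*} [PseudoEMetricSpace Y] (ρ : Y → ℝ≥0∞) (γ : ℝ → Y) : ℝ≥0∞ :=
  ⨆ (c : ℝ) (d : ℝ) (_ : 0 < c) (_ : c ≤ d) (_ : d < 1), lowerLineIntegral ρ γ c d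

/-- `ρ` is admissible for the path family `Γ`. -/
def IsAdmissible {Y : Type*} [PseudoEMetricSpace Y] (Γ : Set (ℝ → Y)) (ρ : Y → ℝ≥0∞) : Prop :=
  ∀ γ ∈ Γ, LocRectifiableOn γ → 1 ≤ openLineIntegral ρ γ

def borelSpaceBorel (Y : Type*) [TopologicalSpace Y] : @BorelSpace Y _ (borel Y) :=
  @BorelSpace.mk Y _ (borel Y) rfl

/-- The Hausdorff 2-measure of a metric space, normalized to coincide with Lebesgue measure
in the Euclidean plane. -/
def hausdorff2 (Y : Type*) [EMetricSpace Y] : @Measure Y (borel Y) :=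
  ENNReal.ofReal (Real.pi / 4) •
    @Measure.hausdorffMeasure Y _ (borel Y) (borelSpaceBorel Y) 2

/-- The conformal modulus of a path family in a metric space, with respect to the
(normalized) Hausdorff 2-measure. -/
def modulusH2 {Y : Type*} [EMetricSpace Y] (Γ : Set (ℝ → Y)) : ℝ≥0∞ :=
  ⨅ (ρ : Y → ℝ≥0∞) (_ : @Measurable Y ℝ≥0∞ (borel Y) _ ρ) (_ : IsAdmissible Γ ρ),
    @MeasureTheory.lintegral Y (borel Y) (hausdorff2 Y) fun y => ρ y ^ 2

/-- The conformal modulus of a path family in the plane, with respect to Lebesgue area measure. -/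
def modulusC (Γ : Set (ℝ → ℂ)) : ℝ≥0∞ :=
  ⨅ (ρ : ℂ → ℝ≥0∞) (_ : Measurable ρ) (_ : IsAdmissible Γ ρ), ∫⁻ z, ρ z ^ 2

/-- A homeomorphism between metric spaces is `K`-quasiconformal if it distorts moduli of
path families by a factor of at most `K` in both directions. -/
def IsQCWith {Y Z : Type*} [EMetricSpace Y] [EMetricSpace Z] (K : ℝ≥0∞) (f : Y ≃ₜ Z) : Prop :=
  ∀ Γ : Set (ℝ → Y),
    modulusH2 ((fun γ => (f : Y → Z) ∘ γ) '' Γ) ≤ K * modulusH2 Γ ∧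
      modulusH2 Γ ≤ K * modulusH2 ((fun γ => (f : Y → Z) ∘ γ) '' Γ)

/-- The family `Γ(A,B;G)` of paths joining `A` and `B` in `G` (parameter interval `[0,1]`). -/
def joinPaths (A B G : Set ℂ) : Set (ℝ → ℂ) :=
  {γ | ContinuousOn γ (Set.Icc 0 1) ∧ γ 0 ∈ A ∧ γ 1 ∈ B ∧
    γ 0 ∈ closure G ∧ γ 1 ∈ closure G ∧ ∀ u ∈ Set.Ioo (0 : ℝ) 1, γ u ∈ G}

/-- The constant `α = 2^{−2−2M−π²C_W²C_D^{1+log₂ C_X}/(8 log 2)}`. -/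
def alphaConst (M : ℕ) (CD CW : ℝ≥0) (CX : ℝ) : ℝ :=
  (2 : ℝ) ^ (-2 - 2 * (M : ℝ) -
    Real.pi ^ 2 * (CW : ℝ) ^ 2 * (CD : ℝ) ^ ((1 : ℝ) + Real.logb 2 CX) / (8 * Real.log 2))


theorem aux_exp_const {α : Type*} [TopologicalSpace α] {S : Set α} (hS : IsPreconnected S)
    {h : α → ℂ} (hc : ContinuousOn h S) (h1 : ∀ z ∈ S, Complex.exp (h z) = 1) :
    ∀ a ∈ S, ∀ b ∈ S, h a = h b := by
  have key : ∀ z ∈ S, ∃ n : ℤ, h z = n * (2 * Real.pi * Complex.I) := fun z hz =>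
    Complex.exp_eq_one_iff.1 (h1 z hz)
  have him : ∀ z ∈ S, ∃ n : ℤ, (h z).im = n * (2 * Real.pi) := by
    intro z hz
    obtain ⟨n, hn⟩ := key z hz
    exact ⟨n, by rw [hn]; simp⟩
  have hle : ∀ a ∈ S, ∀ b ∈ S, (h b).im ≤ (h a).im := by
    intro a ha b hb
    by_contra! hlt
    have hpc : IsPreconnected ((fun z => (h z).im) '' S) :=
      hS.image _ (Complex.continuous_im.comp_continuousOn hc)
    obtain ⟨m, hm⟩ := him a ha
    obtain ⟨n, hn⟩ := him b hb
    have hmn : m < n := by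
      rw [hm, hn] at hlt
      have := lt_of_mul_lt_mul_right hlt (by positivity)
      exact_mod_cast this
    have hmn' : (m : ℝ) + 1 ≤ n := by exact_mod_cast hmn
    have hmem : (m : ℝ) * (2 * Real.pi) + Real.pi ∈ (fun z => (h z).im) '' S := by
      apply hpc.ordConnected.out (mem_image_of_mem _ ha) (mem_image_of_mem _ hb)
      simp only [hm, hn]
      constructor <;> nlinarith [Real.pi_pos]
    obtain ⟨c, hcS, hceq⟩ := hmem
    obtain ⟨k, hk⟩ := him c hcS
    simp only [hk] at hceq
    have h2 : (2 * k : ℝ) = 2 * m + 1 := by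
      have := Real.pi_pos
      have h3 : (2 * k - 2 * m - 1 : ℝ) * Real.pi = 0 := by linarith
      rcases mul_eq_zero.1 h3 with h4 | h4 <;> linarith
    have h3 : (2 * k : ℤ) = 2 * m + 1 := by exact_mod_cast h2
    omega
  intro a ha b hb
  obtain ⟨m, hm⟩ := key a ha
  obtain ⟨n, hn⟩ := key b hb
  have : (h a).im = (h b).im := le_antisymm (hle b hb a ha) (hle a ha b hb)
  apply Complex.ext _ this
  rw [hm, hn]; simp

theorem aux_log {g : ℂ → ℂ} (hg : Continuous g) (h0 : ∀ z, g z ≠ 0) :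
    ∃ f : ℂ → ℂ, Continuous f ∧ ∀ z, Complex.exp (f z) = g z := by
  rcases Complex.isCoveringMapOn_exp.existsUnique_continuousMap_lifts
    ⟨g, hg⟩ (Complex.exp_log (h0 0)) (fun x ↦ h0 x) with ⟨f, ⟨-, hf⟩, -⟩
  exact ⟨f, f.continuous, fun z => congrFun hf z⟩

theorem aux_unicoherent {A B : Set ℂ} (hA : IsClosed A) (hB : IsClosed B)
    (hAc : IsPreconnected A) (hBc : IsPreconnected B) (hU : A ∪ B = univ) :
    IsPreconnected (A ∩ B) := by
  classical
  rw [isPreconnected_closed_iff]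
  intro t t' ht ht' hsub ⟨p, hpAB, hpt⟩ ⟨q, hqAB, hqt⟩
  by_contra hne
  rw [not_nonempty_iff_eq_empty] at hne
  have hd : Disjoint (A ∩ B ∩ t) (A ∩ B ∩ t') := by
    rw [disjoint_left]
    intro z hz hz'
    have : z ∈ A ∩ B ∩ (t ∩ t') := ⟨hz.1, hz.2, hz'.2⟩
    rw [hne] at this; exact this
  obtain ⟨u, hu0, hu1, -⟩ := exists_continuous_zero_one_of_isClosed
    ((hA.inter hB).inter ht) ((hA.inter hB).inter ht') hd
  have hc1 : Continuous fun z => Complex.exp (Real.pi * Complex.I * (u z : ℝ)) := by fun_prop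
  have hc2 : Continuous fun z => Complex.exp (-(Real.pi * Complex.I * (u z : ℝ))) := by fun_prop
  have hagree : ∀ z ∈ A ∩ B, Complex.exp (Real.pi * Complex.I * (u z : ℝ)) =
      Complex.exp (-(Real.pi * Complex.I * (u z : ℝ))) := by
    intro z hz
    rcases hsub hz with h | h
    · have : u z = 0 := hu0 ⟨hz, h⟩
      simp [this]
    · have : u z = 1 := hu1 ⟨hz, h⟩
      simp [this, Complex.exp_neg, Complex.exp_pi_mul_I]
  have hfr : ∀ z ∈ frontier A, Complex.exp (Real.pi * Complex.I * (u z : ℝ)) =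
      Complex.exp (-(Real.pi * Complex.I * (u z : ℝ))) := by
    intro z hz
    apply hagree
    refine ⟨hA.frontier_subset hz, ?_⟩
    have h1 : z ∈ closure Aᶜ := by
      rw [frontier_eq_closure_inter_closure] at hz; exact hz.2
    refine closure_minimal ?_ hB h1
    intro w hw
    have : w ∈ A ∪ B := by rw [hU]; trivial
    exact this.resolve_left hw
  have hφ := Continuous.piecewise hfr hc1 hc2
  obtain ⟨ψ, hψ, hexp⟩ := aux_log hφ (by
    intro z; by_cases hz : z ∈ A <;> simp [hz, Complex.exp_ne_zero])
  have hAconst := aux_exp_const hAc (h := fun z => ψ z - Real.pi * Complex.I * (u z : ℝ))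
    (by fun_prop) (by
      intro z hz
      rw [Complex.exp_sub, hexp]; simp [hz, Complex.exp_ne_zero])
  have hBconst := aux_exp_const hBc (h := fun z => ψ z + Real.pi * Complex.I * (u z : ℝ))
    (by fun_prop) (by
      intro z hz
      rw [Complex.exp_add, hexp]
      by_cases hzA : z ∈ A
      · simp only [hzA, Set.piecewise_eq_of_mem]
        nth_rewrite 1 [hagree z ⟨hzA, hz⟩]
        rw [← Complex.exp_add, neg_add_cancel, Complex.exp_zero]
      · simp only [hzA, not_false_eq_true, Set.piecewise_eq_of_notMem]
        rw [← Complex.exp_add, neg_add_cancel, Complex.exp_zero])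
  have e1 := hAconst p hpAB.1 q hqAB.1
  have e2 := hBconst p hpAB.2 q hqAB.2
  have up : u p = 0 := hu0 ⟨hpAB, hpt⟩
  have uq : u q = 1 := hu1 ⟨hqAB, hqt⟩
  simp only [up, uq] at e1 e2
  have : (Real.pi : ℂ) * Complex.I = 0 := by
    push_cast at e1 e2
    linear_combination (e1 - e2) / 2
  simp [Real.pi_ne_zero] at this

/-- A component of the complement of a connected set has connected complement. -/
theorem aux_compl_comp {G : Set ℂ} (hG : IsClosed G) (hGc : IsConnected G) (z0 : ℂ) :
    IsPreconnected (connectedComponentIn Gᶜ z0)ᶜ := by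
  obtain ⟨g, hg⟩ := hGc.nonempty
  have hgW : ∀ z, g ∉ connectedComponentIn Gᶜ z := fun z h =>
    (connectedComponentIn_subset _ _ h) hg
  refine isPreconnected_of_forall g fun y hy => ?_
  have hGW : G ⊆ (connectedComponentIn Gᶜ z0)ᶜ := fun w hw h =>
    (connectedComponentIn_subset _ _ h) hw
  by_cases hyG : y ∈ G
  · exact ⟨G, hGW, hg, hyG, hGc.isPreconnected⟩
  set V := connectedComponentIn Gᶜ y with hV
  have hyV : y ∈ V := mem_connectedComponentIn hyG
  have hVo : IsOpen V := hG.isOpen_compl.connectedComponentIn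
  have hfrne : (frontier V).Nonempty := by
    rw [nonempty_iff_ne_empty]
    intro h
    rcases isClopen_iff.1 (isClopen_iff_frontier_eq_empty.2 h) with h | h
    · rw [h] at hyV; exact hyV
    · exact hgW y (by rw [← hV, h]; trivial)
  obtain ⟨w, hw⟩ := hfrne
  have hwV : w ∉ V := by
    rw [hVo.frontier_eq] at hw; exact hw.2
  have hwG : w ∈ G := by
    by_contra hwG
    have ho : IsOpen (connectedComponentIn Gᶜ w) := hG.isOpen_compl.connectedComponentIn
    obtain ⟨v, hv1, hv2⟩ := mem_closure_iff.1 (frontier_subset_closure hw) _ ho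
      (mem_connectedComponentIn hwG)
    have e1 := connectedComponentIn_eq hv1
    have e2 := connectedComponentIn_eq hv2
    apply hwV
    rw [hV, e2, ← e1]
    exact mem_connectedComponentIn hwG
  have hVw : IsPreconnected (insert w V) :=
    isPreconnected_connectedComponentIn.subset_closure (subset_insert _ _)
      (insert_subset (frontier_subset_closure hw) subset_closure)
  refine ⟨G ∪ insert w V, ?_, Or.inl hg, Or.inr (Or.inr hyV), ?_⟩
  · refine union_subset hGW (insert_subset (hGW hwG) ?_)
    intro v hv hv'
    have e1 := connectedComponentIn_eq hv
    have e2 := connectedComponentIn_eq hv'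
    exact hy (by rw [e2, ← e1]; exact hyV)
  · exact hGc.isPreconnected.union w hwG (mem_insert _ _) hVw

theorem aux_frontier_conn {G : Set ℂ} (hG : IsClosed G) (hGc : IsConnected G) (z0 : ℂ) :
    IsPreconnected (frontier (connectedComponentIn Gᶜ z0)) ∧
      frontier (connectedComponentIn Gᶜ z0) ⊆ G := by
  have hVo : IsOpen (connectedComponentIn Gᶜ z0) := hG.isOpen_compl.connectedComponentIn
  constructor
  · have := aux_unicoherent (A := closure (connectedComponentIn Gᶜ z0))
      (B := (connectedComponentIn Gᶜ z0)ᶜ) isClosed_closure hVo.isClosed_compl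
      isPreconnected_connectedComponentIn.closure (aux_compl_comp hG hGc z0) (by
        rw [eq_univ_iff_forall]; intro z
        by_cases hz : z ∈ connectedComponentIn Gᶜ z0
        · exact Or.inl (subset_closure hz)
        · exact Or.inr hz)
    rwa [hVo.frontier_eq]
  · intro w hw
    by_contra hwG
    have ho : IsOpen (connectedComponentIn Gᶜ w) := hG.isOpen_compl.connectedComponentIn
    obtain ⟨v, hv1, hv2⟩ := mem_closure_iff.1 (frontier_subset_closure hw) _ ho
      (mem_connectedComponentIn hwG)
    have e1 := connectedComponentIn_eq hv1
    have e2 := connectedComponentIn_eq hv2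
    rw [hVo.frontier_eq] at hw
    apply hw.2
    rw [e2, ← e1]
    exact mem_connectedComponentIn hwG

/-- The component of a point off a closed set on which `z - q` has a logarithm is unbounded. -/
theorem aux_unbounded {Y : Type} [TopologicalSpace Y] {s : Y → ℂ} (hs : IsClosedEmbedding s)
    {F : Set ℂ} (hFs : F = range s) {q : ℂ} (hq : q ∉ F)
    (L : C(Y, ℂ)) (hL : ∀ y, Complex.exp (L y) = s y - q) :
    ¬ Bornology.IsBounded (connectedComponentIn Fᶜ q) := by
  classical
  intro hb
  have hF : IsClosed F := hFs ▸ hs.isClosed_range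
  set V := connectedComponentIn Fᶜ q with hV
  have hVo : IsOpen V := hF.isOpen_compl.connectedComponentIn
  have hqV : q ∈ V := mem_connectedComponentIn hq
  obtain ⟨L', hL'⟩ := L.exists_extension hs
  have hL'' : ∀ z ∈ F, Complex.exp (L' z) = z - q := by
    intro z hz
    rw [hFs] at hz
    obtain ⟨y, rfl⟩ := hz
    rw [← hL y, ← hL']; rfl
  have hfr : frontier V ⊆ F := by
    intro w hw
    by_contra hwG
    have ho : IsOpen (connectedComponentIn Fᶜ w) := hF.isOpen_compl.connectedComponentIn
    obtain ⟨v, hv1, hv2⟩ := mem_closure_iff.1 (frontier_subset_closure hw) _ ho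
      (mem_connectedComponentIn hwG)
    have e1 := connectedComponentIn_eq hv1
    have e2 := connectedComponentIn_eq hv2
    rw [hVo.frontier_eq] at hw
    apply hw.2
    rw [hV, e2, ← e1]
    exact mem_connectedComponentIn hwG
  have hφ := Continuous.piecewise (s := V) (f := fun z => Complex.exp (L' z))
    (g := fun z => z - q) (fun z hz => hL'' z (hfr hz)) (by fun_prop) (by fun_prop)
  obtain ⟨ψ, hψ, hexp⟩ := aux_log hφ (by
    intro z; by_cases hz : z ∈ V
    · simp [hz, Complex.exp_ne_zero]
    · simp only [hz, not_false_eq_true, Set.piecewise_eq_of_notMem]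
      intro h
      rw [sub_eq_zero] at h
      exact hz (h ▸ hqV))
  obtain ⟨R, hR0, hR⟩ := hb.subset_ball_lt 0 q
  have hcirc : ∀ θ : ℝ, Complex.exp (ψ (q + R * Complex.exp (θ * Complex.I))) =
      R * Complex.exp (θ * Complex.I) := by
    intro θ
    have hn : q + R * Complex.exp (θ * Complex.I) ∉ V := by
      intro h
      have := hR h
      simp [mem_ball, dist_eq_norm, Complex.norm_exp_ofReal_mul_I, abs_of_pos hR0] at this
    rw [hexp]; simp only [hn, not_false_eq_true, Set.piecewise_eq_of_notMem]; ring
  have hc := aux_exp_const (isPreconnected_univ (α := ℝ))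
    (h := fun θ : ℝ => ψ (q + R * Complex.exp (θ * Complex.I)) - θ * Complex.I - Real.log R)
    (by fun_prop) (by
      intro θ _
      rw [Complex.exp_sub, Complex.exp_sub, hcirc, ← Complex.ofReal_exp, Real.exp_log hR0]
      have : (R : ℂ) ≠ 0 := by exact_mod_cast hR0.ne'
      field_simp [Complex.exp_ne_zero]) 0 trivial (2 * Real.pi) trivial
  simp only [Complex.ofReal_zero, zero_mul, Complex.exp_zero, Complex.ofReal_mul,
    Complex.ofReal_ofNat, Complex.exp_two_pi_mul_I] at hc
  have : (Real.pi : ℂ) * Complex.I = 0 := by linear_combination hc / 2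
  simp [Real.pi_ne_zero] at this

theorem aux_exterior (R : ℝ) (hR : 0 < R) : IsPreconnected {z : ℂ | R < ‖z‖} := by
  have : {z : ℂ | R < ‖z‖} = Complex.exp '' {w : ℂ | Real.log R < w.re} := by
    ext z
    constructor
    · intro hz
      have hz0 : z ≠ 0 := by
        rintro rfl; simp at hz; linarith
      refine ⟨Complex.log z, ?_, Complex.exp_log hz0⟩
      simp only [mem_ofPred_eq, Complex.log_re]
      exact Real.log_lt_log hR hz
    · rintro ⟨w, hw, rfl⟩
      simp only [mem_ofPred_eq, Complex.norm_exp] at hw ⊢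
      rwa [← Real.log_lt_iff_lt_exp hR]
  rw [this]
  exact ((convex_halfSpace_re_gt _).isPreconnected).image _ Complex.continuous_exp.continuousOn

theorem aux_ret (ρ : ℝ) (hρ : 0 < ρ) : ∃ f : ℂ → closedBall (0 : ℂ) ρ, Continuous f ∧
    ∀ z : closedBall (0 : ℂ) ρ, f z = z := by
  refine ⟨fun z => ⟨((ρ / max ρ ‖z‖ : ℝ) : ℂ) * z, ?_⟩, ?_, ?_⟩
  · rw [mem_closedBall_zero_iff, norm_mul, Complex.norm_real, Real.norm_eq_abs,
      abs_of_nonneg (by positivity)]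
    have : 0 < max ρ ‖z‖ := lt_max_of_lt_left hρ
    rw [div_mul_eq_mul_div, div_le_iff₀ this]
    gcongr; exact le_max_right _ _
  · apply Continuous.subtype_mk
    have : ∀ z : ℂ, max ρ ‖z‖ ≠ 0 := fun z => (lt_max_of_lt_left hρ).ne'
    fun_prop (disch := simp [this])
  · intro z
    have : ‖(z : ℂ)‖ ≤ ρ := mem_closedBall_zero_iff.1 z.2
    ext1
    simp [max_eq_left this, hρ.ne']

theorem aux_top {X : Type*} [TopologicalSpace X] [T2Space X] (φ : OpenPartialHomeomorph X ℂ)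
    (p0 : X) (hsrc : φ.source = {p0}ᶜ) (ρ : ℝ) (hρ : 0 < ρ) (j : closedBall (0 : ℂ) ρ → X)
    (hj : Continuous j) (hinj : Function.Injective j) (hp0 : p0 ∉ range j)
    (E : Set X) (hE : IsCompact E) (hEc : IsConnected E) (hED : E ⊆ range j) :
    ∃ K : Set X, K ⊆ E ∧ K ⊆ closure Eᶜ ∧ IsCompact K ∧ IsPreconnected K ∧
      ∀ C : Set X, IsPreconnected C → p0 ∈ C → (C ∩ interior E).Nonempty →
        (C ∩ K).Nonempty := by
  have hjs : range j ⊆ φ.source := by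
    rw [hsrc]; intro y hy h; exact hp0 (h ▸ hy)
  have hEs : E ⊆ φ.source := hED.trans hjs
  have hφE : ContinuousOn φ E := φ.continuousOn.mono hEs
  have : CompactSpace (closedBall (0 : ℂ) ρ) :=
    isCompact_iff_compactSpace.1 (isCompact_closedBall _ _)
  have hsc : Continuous (φ ∘ j) :=
    φ.continuousOn.comp_continuous hj (fun y => hjs (mem_range_self y))
  have hsi : Function.Injective (φ ∘ j) := fun a b hab =>
    hinj (φ.injOn (hjs (mem_range_self a)) (hjs (mem_range_self b)) hab)
  have hs : IsClosedEmbedding (φ ∘ j) := hsc.isClosedEmbedding hsi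
  set G := φ '' E with hG
  have hGcpt : IsCompact G := hE.image_of_continuousOn hφE
  have hGc : IsConnected G := hEc.image _ hφE
  set F := range (φ ∘ j) with hF
  have hGF : G ⊆ F := by
    rintro _ ⟨y, hy, rfl⟩
    obtain ⟨w, rfl⟩ := hED hy
    exact ⟨w, rfl⟩
  obtain ⟨R, hR0, hR⟩ := hGcpt.isBounded.subset_closedBall_lt 0 0
  have hext : {z : ℂ | R < ‖z‖} ⊆ Gᶜ := by
    intro z hz hzG
    have := hR hzG
    simp at this hz; linarith
  set z0 : ℂ := ((R + 1 : ℝ) : ℂ) with hz0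
  have hz0m : z0 ∈ {z : ℂ | R < ‖z‖} := by
    simp only [hz0, mem_ofPred_eq, Complex.norm_real, Real.norm_eq_abs]
    exact lt_of_lt_of_le (by linarith) (le_abs_self _)
  set W := connectedComponentIn Gᶜ z0 with hW
  have hWo : IsOpen W := hGcpt.isClosed.isOpen_compl.connectedComponentIn
  have hextW : {z : ℂ | R < ‖z‖} ⊆ W :=
    (aux_exterior R hR0).subset_connectedComponentIn hz0m hext
  have hNb : Bornology.IsBounded Wᶜ := by
    refine (isBounded_closedBall (x := (0:ℂ)) (r := R)).subset ?_
    intro z hz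
    by_contra h
    apply hz; apply hextW
    simpa using h
  have hNF : Wᶜ ⊆ F := by
    intro q hq
    by_contra hqF
    obtain ⟨ret, hret, hret'⟩ := aux_ret ρ hρ
    obtain ⟨ℓ, hℓ, hexp⟩ := aux_log (g := fun w => (φ ∘ j) (ret w) - q)
      ((hsc.comp hret).sub continuous_const) (by
        intro w h
        rw [sub_eq_zero] at h
        exact hqF ⟨ret w, h⟩)
    refine aux_unbounded hs hF hqF ⟨fun y => ℓ y, by fun_prop⟩ ?_ (hNb.subset ?_)
    · intro y
      change Complex.exp (ℓ y) = _
      rw [hexp, hret']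
    · intro v hv hvW
      apply hq
      have hvG : connectedComponentIn Fᶜ q ⊆ connectedComponentIn Gᶜ q :=
        connectedComponentIn_mono _ (compl_subset_compl.2 hGF)
      have e1 := connectedComponentIn_eq (hvG hv)
      have e2 := connectedComponentIn_eq hvW
      rw [hW, e2, ← e1]
      exact mem_connectedComponentIn (fun h => hqF (hGF h))
  obtain ⟨hfc, hfG⟩ := aux_frontier_conn hGcpt.isClosed hGc z0
  rw [← hW] at hfc hfG
  have hFt : F ⊆ φ.target := by
    rintro _ ⟨w, rfl⟩
    exact φ.map_source (hjs (mem_range_self w))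
  have hGt : G ⊆ φ.target := hGF.trans hFt
  have hfcpt : IsCompact (frontier W) := hGcpt.of_isClosed_subset isClosed_frontier hfG
  have hsymmc : ContinuousOn φ.symm F := φ.continuousOn_symm.mono hFt
  refine ⟨φ.symm '' frontier W, ?_, ?_, hfcpt.image_of_continuousOn (hsymmc.mono (hfG.trans hGF)),
    hfc.image _ (hsymmc.mono (hfG.trans hGF)), ?_⟩
  · rintro _ ⟨w, hw, rfl⟩
    obtain ⟨y, hy, rfl⟩ := hfG hw
    rwa [φ.left_inv (hEs hy)]
  · rintro _ ⟨w, hw, rfl⟩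
    have hwt : w ∈ φ.target := hGt (hfG hw)
    rw [mem_closure_iff_nhds]
    intro O hO
    have h1 : φ.symm ⁻¹' O ∈ 𝓝 w := (φ.continuousAt_symm hwt) hO
    have h2 : φ.target ∈ 𝓝 w := φ.open_target.mem_nhds hwt
    obtain ⟨v, ⟨hvO, hvt⟩, hvW⟩ := mem_closure_iff_nhds.1 (frontier_subset_closure hw) _
      (inter_mem h1 h2)
    refine ⟨φ.symm v, hvO, ?_⟩
    intro hvE
    have : v ∈ G := ⟨_, hvE, φ.right_inv hvt⟩
    exact connectedComponentIn_subset _ _ hvW this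
  · rintro C hC hpC ⟨p, hpC', hpE⟩
    by_contra hne
    rw [not_nonempty_iff_eq_empty] at hne
    have hNcpt : IsCompact Wᶜ := by
      exact Metric.isCompact_of_isClosed_isBounded hWo.isClosed_compl hNb
    have hcl : IsClosed (φ.symm '' Wᶜ) :=
      (hNcpt.image_of_continuousOn (hsymmc.mono hNF)).isClosed
    have hop : IsOpen (φ.symm '' interior Wᶜ) :=
      φ.symm.isOpen_image_of_subset_source isOpen_interior
        (interior_subset.trans (hNF.trans hFt))
    have hp0N : p0 ∉ φ.symm '' Wᶜ := by
      rintro ⟨w, hw, hwp⟩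
      have := φ.map_target (hFt (hNF hw))
      rw [hwp, hsrc] at this
      exact this rfl
    have hpN : p ∈ φ.symm '' interior Wᶜ := by
      have hps : p ∈ φ.source := hEs (interior_subset hpE)
      refine ⟨φ p, ?_, φ.left_inv hps⟩
      have hop' : IsOpen (φ '' interior E) :=
        φ.isOpen_image_of_subset_source isOpen_interior (interior_subset.trans hEs)
      refine interior_mono ?_ (interior_maximal subset_rfl hop' (mem_image_of_mem _ hpE))
      rintro _ ⟨y, hy, rfl⟩ hyW
      exact connectedComponentIn_subset _ _ hyW (mem_image_of_mem _ (interior_subset hy))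
    obtain ⟨y, hyC, hy1, hy2⟩ := hC _ _ hop hcl.isOpen_compl (by
      intro y hy
      by_cases hyN : y ∈ φ.symm '' Wᶜ
      · left
        obtain ⟨w, hw, rfl⟩ := hyN
        by_cases hwi : w ∈ interior Wᶜ
        · exact mem_image_of_mem _ hwi
        · exfalso
          have hwf : w ∈ frontier W := by
            rw [← frontier_compl]
            exact ⟨subset_closure hw, hwi⟩
          have : φ.symm w ∈ C ∩ φ.symm '' frontier W := ⟨hy, mem_image_of_mem _ hwf⟩
          rw [hne] at this; exact this
      · exact Or.inr hyN) ⟨p, hpC', hpN⟩ ⟨p0, hpC, hp0N⟩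
    exact hy2 (image_mono interior_subset hy1)

theorem aux_chart {X : Type*} [TopologicalSpace X] {Ω : Set ↥Sphere2} (hΩ : IsOpen Ω)
    (h : X ≃ₜ ↥Ω) (p0 : X) :
    ∃ φ : OpenPartialHomeomorph X ℂ, φ.source = {p0}ᶜ := by
  have : Fact (Module.finrank ℝ (EuclideanSpace ℝ (Fin 3)) = 2 + 1) := ⟨by simp⟩
  have hne : Nonempty X := ⟨p0⟩
  have hemb : IsOpenEmbedding (fun y : X => ((h y : ↥Ω) : ↥Sphere2)) :=
    hΩ.isOpenEmbedding_subtypeVal.comp h.isOpenEmbedding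
  refine ⟨((hemb.toOpenPartialHomeomorph _).trans
    (stereographic' 2 ((h p0 : ↥Ω) : ↥Sphere2))).trans
    Complex.orthonormalBasisOneI.repr.symm.toHomeomorph.toOpenPartialHomeomorph, ?_⟩
  ext y
  simp [Subtype.ext_iff]
  constructor
  · intro hy hyp; exact hy (by rw [hyp])
  · intro hy hyp; exact hy (h.injective (Subtype.ext (Subtype.ext hyp)))

section

variable {X : Type*} [MetricSpace X] [MeasurableSpace X]

theorem pairBall_comm' (x y : X) : pairBall x y = pairBall y x := by
  unfold pairBall; rw [dist_comm x y, union_comm]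

theorem pairBall_subset (x y : X) {ε : ℝ} (h : dist x y ≤ ε) :
    pairBall x y ⊆ Metric.ball x (2 * ε) := by
  rintro z (hz | hz)
  · rw [mem_ball] at *; linarith [dist_nonneg (x := x) (y := y)]
  · rw [mem_ball] at *
    have := dist_triangle z y x
    rw [dist_comm y x] at this; linarith

theorem qDelta_anti (μ : Measure X) (s : ℝ) {δ δ' : ℝ} (h : δ ≤ δ') (x y : X) :
    qDelta μ s δ' x y ≤ qDelta μ s δ x y := by
  unfold qDelta
  refine le_iInf fun m => le_iInf fun z => le_iInf fun hz => ?_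
  exact iInf_le_of_le m (iInf_le_of_le z (iInf_le_of_le
    ⟨hz.1, hz.2.1, fun j hj => (hz.2.2 j hj).trans h⟩ le_rfl))

theorem qDelta_le (μ : Measure X) (s : ℝ) {δ : ℝ} {x y : X} {z : ℕ → X} {m : ℕ}
    (hch : IsDeltaChain δ x y z m) :
    qDelta μ s δ x y ≤ ∑ j ∈ Finset.range m, μ (pairBall (z j) (z (j + 1))) ^ (1 / s) := by
  unfold qDelta
  exact iInf_le_of_le m (iInf_le_of_le z (iInf_le_of_le hch le_rfl))

theorem qDelta_append (μ : Measure X) (s : ℝ) {δ : ℝ} (a y y' : X) (h : dist y y' ≤ δ) :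
    qDelta μ s δ a y' ≤ qDelta μ s δ a y + μ (pairBall y y') ^ (1 / s) := by
  conv_rhs => unfold qDelta
  simp only [ENNReal.iInf_add]
  refine le_iInf fun m => le_iInf fun z => le_iInf fun hz => ?_
  obtain ⟨h0, hm, hz⟩ := hz
  set z' : ℕ → X := fun j => if j ≤ m then z j else y' with hz'
  have hch : IsDeltaChain δ a y' z' (m + 1) := by
    refine ⟨by simp [hz', h0], by simp [hz'], ?_⟩
    intro j hj
    rcases Nat.lt_succ_iff_lt_or_eq.1 hj with hj | rfl
    · have h1 : j ≤ m := hj.le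
      have h2 : j + 1 ≤ m := hj
      simp only [hz', h1, h2, if_true]
      exact hz j hj
    · simp [hz', hm, h]
  refine (qDelta_le μ s hch).trans ?_
  rw [Finset.sum_range_succ]
  refine add_le_add (le_of_eq ?_) (le_of_eq ?_)
  · refine Finset.sum_congr rfl fun j hj => ?_
    have hj := Finset.mem_range.1 hj
    have h1 : j ≤ m := hj.le
    have h2 : j + 1 ≤ m := hj
    simp only [hz', h1, h2, if_true]
  · simp [hz', hm]

theorem qDelta_prepend (μ : Measure X) (s : ℝ) {δ : ℝ} (a a' y : X) (h : dist a a' ≤ δ) :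
    qDelta μ s δ a y ≤ μ (pairBall a a') ^ (1 / s) + qDelta μ s δ a' y := by
  conv_rhs => unfold qDelta
  simp only [ENNReal.add_iInf]
  refine le_iInf fun m => le_iInf fun z => le_iInf fun hz => ?_
  obtain ⟨h0, hm, hz⟩ := hz
  set z' : ℕ → X := fun j => Nat.casesOn j a (fun k => z k) with hz'
  have hch : IsDeltaChain δ a y z' (m + 1) := by
    refine ⟨rfl, hm, ?_⟩
    intro j hj
    rcases j with _ | j
    · change dist a (z 0) ≤ δ
      rw [h0]; exact h
    · exact hz j (by omega)
  refine (qDelta_le μ s hch).trans ?_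
  rw [Finset.sum_range_succ', add_comm]
  refine add_le_add (le_of_eq ?_) le_rfl
  change μ (pairBall a (z 0)) ^ (1 / s) = _
  rw [h0]

theorem qDelta_self (μ : Measure X) (s δ : ℝ) (a : X) : qDelta μ s δ a a = 0 := by
  apply le_antisymm _ bot_le
  exact (qDelta_le μ s (z := fun _ => a) (m := 0)
    ⟨rfl, rfl, fun j hj => absurd hj (Nat.not_lt_zero j)⟩).trans (by simp)

theorem qmu_le (μ : Measure X) (s : ℝ) (a b : X) (S : ℝ≥0∞)
    (h : ∀ δ > 0, qDelta μ s δ a b ≤ S) : qmu μ s a b ≤ S := by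
  unfold qmu
  apply limsup_le_of_le (by isBoundedDefault)
  filter_upwards [self_mem_nhdsWithin] with δ hδ using h δ hδ

/-- First exit. -/
theorem qDelta_exit (μ : Measure X) (s : ℝ) {δ R : ℝ} (x a b : X) (T : ℝ≥0∞)
    (ha : a ∈ Metric.ball x R) (hb : b ∉ Metric.ball x R)
    (hT : ∀ b', R ≤ dist b' x → dist b' x ≤ R + δ → T ≤ qDelta μ s δ a b') :
    T ≤ qDelta μ s δ a b := by
  classical
  conv_rhs => unfold qDelta
  refine le_iInf fun m => le_iInf fun z => le_iInf fun hz => ?_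
  obtain ⟨h0, hm, hz⟩ := hz
  have hex : ∃ j, z j ∉ Metric.ball x R := ⟨m, hm ▸ hb⟩
  set k := Nat.find hex with hk
  have hkm : k ≤ m := Nat.find_min' hex (hm ▸ hb)
  have hkn : z k ∉ Metric.ball x R := Nat.find_spec hex
  have hk0 : k ≠ 0 := by
    intro h; rw [h, h0] at hkn; exact hkn ha
  obtain ⟨i, hi⟩ := Nat.exists_eq_succ_of_ne_zero hk0
  have hik : z i ∈ Metric.ball x R := by
    by_contra h
    have := Nat.find_min' hex h
    omega
  have hd := hz i (by omega)
  have := hT (z k) (by simpa using hkn) (by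
    rw [hi]
    have := dist_triangle (z (i+1)) (z i) x
    rw [mem_ball] at hik
    rw [dist_comm] at hd
    show dist (z (i+1)) x ≤ _
    linarith)
  refine this.trans ?_
  refine (qDelta_le μ s (z := z) (m := k)
    ⟨h0, rfl, fun j hj => hz j (by omega)⟩).trans ?_
  exact Finset.sum_le_sum_of_subset (Finset.range_mono hkm)

theorem llc_connected {lam : ℝ} (hLLC : IsLLC X lam) [Nonempty X] : ConnectedSpace X := by
  refine @ConnectedSpace.mk X _ ⟨?_⟩ ‹_›
  apply isPreconnected_of_forall_pair
  intro a _ b _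
  obtain ⟨K, hK, -, ha, hb⟩ := (hLLC a (dist b a + 1) (by positivity)).1 a
    (by simp; positivity) b (by simp)
  exact ⟨K, subset_univ _, ha, hb, hK.2.isPreconnected⟩

theorem no_atom [BorelSpace X] [ConnectedSpace X] [Nontrivial X] {CD : ℝ≥0} {μ : Measure X}
    (hdbl : IsDoublingWith μ CD) (a : X) : μ {a} = 0 := by
  have hlim : Tendsto (fun n : ℕ => μ (Metric.ball a (1 / ((n:ℝ) + 1)) \ {a})) atTop (𝓝 0) := by
    have h := tendsto_measure_iInter_atTop (μ := μ)
      (s := fun n : ℕ => Metric.ball a (1 / ((n:ℝ) + 1)) \ {a})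
      (fun n => (isOpen_ball.measurableSet.diff (measurableSet_singleton a)).nullMeasurableSet)
      (by
        intro m n hmn
        apply diff_subset_diff_left
        apply Metric.ball_subset_ball
        exact one_div_le_one_div_of_le (by positivity) (by exact_mod_cast Nat.succ_le_succ hmn))
      ⟨0, ((measure_mono diff_subset).trans_lt (hdbl.1 a _ (by positivity)).2).ne⟩
    have he : (⋂ n : ℕ, Metric.ball a (1 / ((n:ℝ) + 1)) \ {a}) = ∅ := by
      ext y
      simp only [mem_iInter, mem_empty_iff_false, iff_false, not_forall]
      by_cases hy : y = a
      · exact ⟨0, by simp [hy]⟩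
      · obtain ⟨n, hn⟩ := exists_nat_one_div_lt (dist_pos.2 hy)
        refine ⟨n, fun h => ?_⟩
        have := Metric.mem_ball.1 h.1
        linarith
    rw [he, measure_empty] at h
    exact h
  have hlim2 : Tendsto (fun n : ℕ => (CD : ℝ≥0∞) * (CD * μ (Metric.ball a (1 / ((n:ℝ) + 1)) \ {a})))
      atTop (𝓝 0) := by
    have := ENNReal.Tendsto.const_mul (a := (CD:ℝ≥0∞)) hlim (Or.inr ENNReal.coe_ne_top)
    have := ENNReal.Tendsto.const_mul (a := (CD:ℝ≥0∞)) this (Or.inr ENNReal.coe_ne_top)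
    simpa using this
  apply le_antisymm _ bot_le
  refine ge_of_tendsto' hlim2 fun n => ?_
  have hpos : (0:ℝ) < 1 / ((n:ℝ) + 1) := by positivity
  have hf : ∃ᶠ y in 𝓝[≠] a, y ∈ Metric.ball a (1 / ((n:ℝ) + 1) / 2) := by
    apply Eventually.frequently
    exact mem_nhdsWithin_of_mem_nhds (Metric.ball_mem_nhds a (by positivity))
  obtain ⟨y, hy, hya⟩ := (hf.and_eventually self_mem_nhdsWithin).exists
  have hya : y ≠ a := hya
  have hd := dist_pos.2 hya
  set s := dist y a with hs
  rw [Metric.mem_ball, ← hs] at hy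
  have h1 := hdbl.2 y s hd
  have h2 := hdbl.2 y (s/2) (by positivity)
  rw [show 2 * (s/2) = s by ring] at h2
  calc μ {a} ≤ μ (Metric.ball y (2*s)) := measure_mono (by
        rw [singleton_subset_iff, Metric.mem_ball, dist_comm, ← hs]; linarith)
    _ ≤ CD * (CD * μ (Metric.ball y (s/2))) := h1.trans (mul_le_mul_right h2 _)
    _ ≤ _ := by
        refine mul_le_mul_right (mul_le_mul_right (measure_mono ?_) _) _
        intro z hz
        rw [Metric.mem_ball] at hz
        refine ⟨?_, ?_⟩
        · rw [Metric.mem_ball]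
          have := dist_triangle z y a
          linarith
        · rintro rfl
          rw [dist_comm, ← hs] at hz
          linarith

theorem small_pairBall [BorelSpace X] {CD : ℝ≥0} {μ : Measure X}
    (hdbl : IsDoublingWith μ CD) (a : X) (h0 : μ {a} = 0) (η : ℝ≥0∞) (hη : 0 < η) :
    ∃ ε > 0, ∀ y, dist a y ≤ ε → μ (pairBall a y) ^ (1 / 2 : ℝ) ≤ η := by
  have hlim : Tendsto (fun n : ℕ => μ (Metric.ball a (1 / ((n:ℝ) + 1)))) atTop (𝓝 0) := by
    have h := tendsto_measure_iInter_atTop (μ := μ)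
      (s := fun n : ℕ => Metric.ball a (1 / ((n:ℝ) + 1)))
      (fun n => (isOpen_ball.measurableSet).nullMeasurableSet)
      (by
        intro m n hmn
        apply Metric.ball_subset_ball
        exact one_div_le_one_div_of_le (by positivity) (by exact_mod_cast Nat.succ_le_succ hmn))
      ⟨0, ((hdbl.1 a _ (by positivity)).2).ne⟩
    have he : (⋂ n : ℕ, Metric.ball a (1 / ((n:ℝ) + 1))) = {a} := by
      ext y
      simp only [mem_iInter, mem_singleton_iff]
      constructor
      · intro h
        by_contra hy
        obtain ⟨n, hn⟩ := exists_nat_one_div_lt (dist_pos.2 hy)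
        have := Metric.mem_ball.1 (h n)
        linarith
      · rintro rfl n
        exact Metric.mem_ball_self (by positivity)
    rw [he, h0] at h
    exact h
  have hη2 : 0 < η ^ (2:ℝ) := by
    apply ENNReal.rpow_pos_of_nonneg hη (by norm_num)
  obtain ⟨n, hn⟩ := (hlim.eventually (gt_mem_nhds hη2)).exists
  refine ⟨1 / ((n:ℝ) + 1) / 2, by positivity, fun y hy => ?_⟩
  have : μ (pairBall a y) ≤ η ^ (2:ℝ) := by
    refine (measure_mono (pairBall_subset a y hy)).trans ?_
    rw [show 2 * (1 / ((n:ℝ) + 1) / 2) = 1 / ((n:ℝ) + 1) by ring]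
    exact hn.le
  calc μ (pairBall a y) ^ (1 / 2 : ℝ) ≤ (η ^ (2:ℝ)) ^ (1/2:ℝ) :=
        ENNReal.rpow_le_rpow this (by norm_num)
    _ = η := by rw [← ENNReal.rpow_mul]; norm_num

theorem local_lower {μ : Measure X} (hsm : ∀ (a : X) (η : ℝ≥0∞), 0 < η →
      ∃ ε > 0, ∀ y, dist a y ≤ ε → μ (pairBall a y) ^ (1 / 2 : ℝ) ≤ η)
    (a b : X) (T : ℝ≥0∞) (hT : T < qmu μ 2 a b) :
    ∃ δ > 0, ∃ ε > 0, ∀ a' b', dist a a' ≤ ε → dist b b' ≤ ε → T ≤ qDelta μ 2 δ a' b' := by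
  obtain ⟨T2, h1, h2⟩ := exists_between hT
  have hf := frequently_lt_of_lt_limsup (by isBoundedDefault) h2
  obtain ⟨δ, hδ, hδ0⟩ := (hf.and_eventually self_mem_nhdsWithin).exists
  have hδ0 : 0 < δ := hδ0
  have hη : 0 < (T2 - T) / 2 := ENNReal.half_pos (tsub_pos_of_lt h1).ne'
  obtain ⟨εa, ha0, ha⟩ := hsm a _ hη
  obtain ⟨εb, hb0, hb⟩ := hsm b _ hη
  refine ⟨δ, hδ0, min δ (min εa εb), by positivity, fun a' b' haa hbb => ?_⟩
  have e1 := qDelta_prepend μ 2 (δ := δ) a a' b (haa.trans (min_le_left _ _))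
  have e2 := qDelta_append μ 2 (δ := δ) a' b' b
    (by rw [dist_comm]; exact hbb.trans (min_le_left _ _))
  have e3 := ha a' (haa.trans ((min_le_right _ _).trans (min_le_left _ _)))
  have e4 := hb b' (hbb.trans ((min_le_right _ _).trans (min_le_right _ _)))
  rw [pairBall_comm'] at e4
  have hTtop : T ≠ ⊤ := h1.ne_top
  have e5 : T2 ≤ qDelta μ 2 δ a' b' + (T2 - T) := by
    calc T2 ≤ (T2 - T) / 2 + (qDelta μ 2 δ a' b' + (T2 - T) / 2) :=
          hδ.le.trans (e1.trans (add_le_add e3 (e2.trans (add_le_add_right e4 _))))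
      _ = qDelta μ 2 δ a' b' + ((T2 - T) / 2 + (T2 - T) / 2) := by ring
      _ = _ := by rw [ENNReal.add_halves]
  have e6 : T + (T2 - T) ≤ qDelta μ 2 δ a' b' + (T2 - T) := by
    rwa [add_tsub_cancel_of_le h1.le]
  have : T2 - T ≠ ⊤ := by
    intro h
    rcases eq_or_ne T2 ⊤ with h3 | h3
    · exact (h2.ne_top h3)
    · exact ENNReal.sub_ne_top h3 h
  exact (ENNReal.add_le_add_iff_right this).1 e6

theorem uniform_lower {μ : Measure X} (hsm : ∀ (a : X) (η : ℝ≥0∞), 0 < η →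
      ∃ ε > 0, ∀ y, dist a y ≤ ε → μ (pairBall a y) ^ (1 / 2 : ℝ) ≤ η)
    (x : X) {R1 R2 R3 : ℝ} (h12 : R1 < R2) (h23 : R2 < R3)
    (hc : IsCompact (Metric.closedBall x R3)) (T : ℝ≥0∞)
    (hT : ∀ a ∈ Metric.closedBall x R1, ∀ b ∉ Metric.ball x R2, T < qmu μ 2 a b) :
    ∃ δ > 0, δ ≤ R3 - R2 ∧ ∀ a ∈ Metric.closedBall x R1, ∀ b ∉ Metric.ball x R2,
      T ≤ qDelta μ 2 δ a b := by
  have hc1 : IsCompact (Metric.closedBall x R1 ×ˢ (Metric.closedBall x R3 \ Metric.ball x R2)) :=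
    (hc.of_isClosed_subset isClosed_closedBall
      (Metric.closedBall_subset_closedBall (by linarith))).prod (hc.diff isOpen_ball)
  have key : ∃ δ > 0, ∀ p ∈ (Metric.closedBall x R1 ×ˢ
      (Metric.closedBall x R3 \ Metric.ball x R2)), T ≤ qDelta μ 2 δ p.1 p.2 := by
    refine hc1.induction_on (p := fun s => ∃ δ > 0, ∀ p ∈ s, T ≤ qDelta μ 2 δ p.1 p.2) ?_ ?_ ?_ ?_
    · exact ⟨1, one_pos, by simp⟩
    · rintro s t hst ⟨δ, h0, h⟩
      exact ⟨δ, h0, fun p hp => h p (hst hp)⟩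
    · rintro s t ⟨δ, h0, h⟩ ⟨δ', h0', h'⟩
      refine ⟨min δ δ', by positivity, ?_⟩
      rintro p (hp | hp)
      · exact (h p hp).trans (qDelta_anti μ 2 (min_le_left _ _) _ _)
      · exact (h' p hp).trans (qDelta_anti μ 2 (min_le_right _ _) _ _)
    · rintro ⟨a, b⟩ ⟨ha, hb⟩
      obtain ⟨δ, h0, ε, hε, h⟩ := local_lower hsm a b T (hT a ha b hb.2)
      refine ⟨Metric.closedBall (a, b) ε,
        mem_nhdsWithin_of_mem_nhds (Metric.closedBall_mem_nhds _ hε), δ, h0, ?_⟩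
      rintro ⟨a', b'⟩ hp
      rw [Metric.mem_closedBall, Prod.dist_eq, max_le_iff] at hp
      exact h a' b' (by rw [dist_comm]; exact hp.1) (by rw [dist_comm]; exact hp.2)
  obtain ⟨δ, h0, h⟩ := key
  refine ⟨min δ (R3 - R2), by have := sub_pos.2 h23; positivity, min_le_right _ _, ?_⟩
  intro a ha b hb
  refine qDelta_exit μ 2 x a b T (Metric.closedBall_subset_ball h12 ha) hb ?_
  intro b' h1 h2
  refine (h (a, b') ⟨ha, ?_, ?_⟩).trans (qDelta_anti μ 2 (min_le_left _ _) _ _)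
  · rw [Metric.mem_closedBall]
    have := min_le_right δ (R3 - R2)
    linarith
  · simpa using h1

/-- Truncation. -/
theorem trunc_lip {μ : Measure X} (hfin : ∀ a b : X, μ (pairBall a b) ≠ ⊤) {δ : ℝ}
    (h : X → ℝ≥0∞) (hh : ∀ y y', dist y y' ≤ δ → h y' ≤ h y + μ (pairBall y y') ^ (1 / 2 : ℝ))
    (N : ℝ≥0∞) (hN : N ≠ ⊤) (y y' : X) (hd : dist y y' ≤ δ) :
    |(min (h y) N).toReal - (min (h y') N).toReal| ≤ (μ (pairBall y y') ^ (1 / 2 : ℝ)).toReal := by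
  have hw : ∀ a b : X, μ (pairBall a b) ^ (1 / 2 : ℝ) ≠ ⊤ := fun a b =>
    ENNReal.rpow_ne_top_of_nonneg (by norm_num) (hfin a b)
  have key : ∀ y y', dist y y' ≤ δ → (min (h y') N).toReal ≤
      (min (h y) N).toReal + (μ (pairBall y y') ^ (1 / 2 : ℝ)).toReal := by
    intro y y' hd
    have hm : min (h y) N ≠ ⊤ := (lt_of_le_of_lt (min_le_right _ _) hN.lt_top).ne
    rw [← ENNReal.toReal_add hm (hw _ _)]
    apply ENNReal.toReal_mono (ENNReal.add_ne_top.2 ⟨hm, hw _ _⟩)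
    rcases le_total (h y) N with hle | hle
    · rw [min_eq_left hle]
      exact (min_le_left _ _).trans (hh y y' hd)
    · rw [min_eq_right hle]
      exact (min_le_right _ _).trans le_self_add
  have h1 := key y y' hd
  have h2 := key y' y (by rwa [dist_comm])
  rw [pairBall_comm'] at h2
  rw [abs_le]; constructor <;> linarith

theorem trunc_cont {μ : Measure X} (hsm : ∀ (a : X) (η : ℝ≥0∞), 0 < η →
      ∃ ε > 0, ∀ y, dist a y ≤ ε → μ (pairBall a y) ^ (1 / 2 : ℝ) ≤ η) {δ : ℝ} (hδ : 0 < δ)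
    (g : X → ℝ) (hg : ∀ y y', dist y y' ≤ δ →
      |g y - g y'| ≤ (μ (pairBall y y') ^ (1 / 2 : ℝ)).toReal) : Continuous g := by
  rw [Metric.continuous_iff]
  intro a η hη
  obtain ⟨ε, h0, h⟩ := hsm a (ENNReal.ofReal (η / 2)) (by simpa using hη)
  refine ⟨min δ ε, by positivity, fun y hy => ?_⟩
  rw [dist_comm] at hy
  have h1 := hg a y (hy.le.trans (min_le_left _ _))
  have h2 := ENNReal.toReal_mono ENNReal.ofReal_ne_top (h y (hy.le.trans (min_le_right _ _)))
  rw [ENNReal.toReal_ofReal (by positivity)] at h2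
  rw [dist_comm, Real.dist_eq]
  linarith

theorem level_pick (I : Finset X) (o g : X → ℝ) (ho : ∀ i, 0 ≤ o i) {τ : ℝ} (hτ : 0 < τ) :
    ∃ t ∈ Ioo 0 τ, ∑ i ∈ I.filter (fun i => |t - g i| ≤ o i), ENNReal.ofReal (2 * o i) ≤
      (∑ i ∈ I, 4 * ENNReal.ofReal (o i) ^ 2) / ENNReal.ofReal τ := by
  classical
  set f : ℝ → ℝ≥0∞ := fun t => ∑ i ∈ I,
    (Icc (g i - o i) (g i + o i)).indicator (fun _ => ENNReal.ofReal (2 * o i)) t with hf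
  have hfm : Measurable f := by
    apply Finset.measurable_sum
    intro i _
    exact measurable_const.indicator measurableSet_Icc
  obtain ⟨t, ht, h⟩ := exists_le_setLAverage (μ := volume) (s := Ioo 0 τ) (f := f)
    (by simp [hτ]) (by simp) hfm.aemeasurable
  refine ⟨t, ht, ?_⟩
  have hft : ∑ i ∈ I.filter (fun i => |t - g i| ≤ o i), ENNReal.ofReal (2 * o i) = f t := by
    rw [hf, Finset.sum_filter]
    refine Finset.sum_congr rfl fun i _ => ?_
    rw [indicator_apply]
    congr 1
    simp only [mem_Icc, abs_le, eq_iff_iff]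
    constructor <;> rintro ⟨h1, h2⟩ <;> constructor <;> linarith
  rw [hft]
  refine h.trans ?_
  rw [setLAverage_eq]
  have : volume (Ioo 0 τ) = ENNReal.ofReal τ := by simp
  rw [this]
  gcongr
  calc ∫⁻ a in Ioo 0 τ, f a ≤ ∫⁻ a, f a := setLIntegral_le_lintegral _ _
    _ = ∑ i ∈ I, 4 * ENNReal.ofReal (o i) ^ 2 := by
      rw [hf, lintegral_finset_sum]
      · refine Finset.sum_congr rfl fun i _ => ?_
        rw [lintegral_indicator measurableSet_Icc, setLIntegral_const, Real.volume_Icc,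
          show g i + o i - (g i - o i) = 2 * o i by ring,
          ENNReal.ofReal_mul (by norm_num : (0:ℝ) ≤ 2)]
        rw [show ENNReal.ofReal 2 = 2 by simp]
        ring
      · intro i _
        exact measurable_const.indicator measurableSet_Icc
    _ ≤ _ := le_rfl

theorem length_bound (J : Finset X) (o u : X → ℝ) {K : Set X} (hK : IsPreconnected K)
    (hu : ContinuousOn u K) (hJ : ∀ y ∈ K, ∃ i ∈ J, |u y - u i| ≤ o i) {a b : X}
    (ha : a ∈ K) (hb : b ∈ K) :
    ENNReal.ofReal (u b - u a) ≤ ∑ i ∈ J, ENNReal.ofReal (2 * o i) := by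
  have h1 : Icc (u a) (u b) ⊆ ⋃ i ∈ J, Icc (u i - o i) (u i + o i) := by
    intro s hs
    obtain ⟨y, hy, rfl⟩ := hK.intermediate_value ha hb hu hs
    obtain ⟨i, hi, h⟩ := hJ y hy
    rw [abs_le] at h
    simp only [mem_iUnion]
    exact ⟨i, hi, by linarith, by linarith⟩
  calc ENNReal.ofReal (u b - u a) = volume (Icc (u a) (u b)) := by simp
    _ ≤ volume (⋃ i ∈ J, Icc (u i - o i) (u i + o i)) := measure_mono h1
    _ ≤ ∑ i ∈ J, volume (Icc (u i - o i) (u i + o i)) := measure_biUnion_finset_le _ _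
    _ = _ := by
      refine Finset.sum_congr rfl fun i _ => ?_
      rw [Real.volume_Icc]; congr 1; ring

theorem exists_net {F : Set X} (hF : IsCompact F) {ε : ℝ} (hε : 0 < ε) :
    ∃ I : Finset X, (∀ i ∈ I, i ∈ F) ∧ (∀ i ∈ I, ∀ j ∈ I, i ≠ j → ε < dist i j) ∧
      ∀ y ∈ F, ∃ i ∈ I, dist i y ≤ ε := by
  set e : ℝ≥0 := ⟨ε, hε.le⟩ with he
  have he0 : (e / 2 : ℝ≥0) ≠ 0 := by
    have : 0 < e := hε
    positivity
  obtain ⟨N, hNF, hNf, hN⟩ := exists_finite_isCover_of_isCompact he0 hF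
  have h1 : packingNumber e F ≠ ⊤ := by
    have h2 := packingNumber_two_mul_le_externalCoveringNumber (e / 2) F
    rw [show 2 * (e / 2) = e by field_simp] at h2
    have h3 := hN.externalCoveringNumber_le_encard
    exact (lt_of_le_of_lt (h2.trans h3) hNf.encard_lt_top).ne
  have hfin : (maximalSeparatedSet e F).Finite := by
    rw [← encard_ne_top_iff, encard_maximalSeparatedSet h1]; exact h1
  refine ⟨hfin.toFinset, ?_, ?_, ?_⟩
  · intro i hi
    exact maximalSeparatedSet_subset (hfin.mem_toFinset.1 hi)
  · intro i hi j hj hij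
    have : (e : ℝ≥0∞) < edist i j := isSeparated_maximalSeparatedSet (hfin.mem_toFinset.1 hi) (hfin.mem_toFinset.1 hj) hij
    rw [edist_nndist] at this
    exact_mod_cast this
  · intro y hy
    have := isCover_iff_subset_iUnion_closedBall.1 (isCover_maximalSeparatedSet h1) hy
    simp only [mem_iUnion] at this
    obtain ⟨i, hi, h⟩ := this
    exact ⟨i, hfin.mem_toFinset.2 hi, by rw [dist_comm]; exact h⟩

theorem level_set [BorelSpace X] {CD : ℝ≥0} {μ : Measure X}
    (hdbl : IsDoublingWith μ CD)
    (hsm : ∀ (a : X) (η : ℝ≥0∞), 0 < η →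
      ∃ ε > 0, ∀ y, dist a y ≤ ε → μ (pairBall a y) ^ (1 / 2 : ℝ) ≤ η)
    (hfin : ∀ a b : X, μ (pairBall a b) ≠ ⊤) {δ : ℝ} (hδ : 0 < δ) {x : X} {R ρ τ : ℝ}
    (hR : 0 < R) (hρ : 0 < ρ) (hτ : 0 < τ)
    (hc : IsCompact (Metric.closedBall x R)) (g : X → ℝ) (hg : ∀ y y', dist y y' ≤ δ →
      |g y - g y'| ≤ (μ (pairBall y y') ^ (1 / 2 : ℝ)).toReal) :
    ∃ t ∈ Ioo 0 τ, ∀ K, IsPreconnected K → K ⊆ Metric.closedBall x R → (∀ y ∈ K, g y = t) →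
      ∀ a ∈ K, ∀ b ∈ K, qDelta μ 2 δ a b ≤
        4 * (CD : ℝ≥0∞) ^ 2 * μ (Metric.ball x (R + ρ)) / ENNReal.ofReal τ := by
  classical
  set ε := min δ ρ with hεd
  have hε : 0 < ε := by positivity
  obtain ⟨I, hIF, hIs, hIc⟩ := exists_net hc hε
  set o : X → ℝ := fun i => (μ (Metric.ball i (2 * ε)) ^ (1 / 2 : ℝ)).toReal with ho
  have hbt : ∀ i : X, μ (Metric.ball i (2 * ε)) ^ (1 / 2 : ℝ) ≠ ⊤ := fun i =>
    ENNReal.rpow_ne_top_of_nonneg (by norm_num) (hdbl.1 i _ (by positivity)).2.ne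
  have hoo : ∀ (v : X → ℝ), (∀ y y', dist y y' ≤ δ →
      |v y - v y'| ≤ (μ (pairBall y y') ^ (1 / 2 : ℝ)).toReal) → ∀ i y, dist i y ≤ ε →
      |v y - v i| ≤ o i := by
    intro v hv i y hiy
    rw [abs_sub_comm]
    refine (hv i y (hiy.trans (min_le_left _ _))).trans ?_
    apply ENNReal.toReal_mono (hbt i)
    exact ENNReal.rpow_le_rpow (measure_mono (pairBall_subset i y hiy)) (by norm_num)
  obtain ⟨t, ht, hsum⟩ := level_pick I o g (fun i => ENNReal.toReal_nonneg) hτ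
  refine ⟨t, ht, ?_⟩
  set S := 4 * (CD : ℝ≥0∞) ^ 2 * μ (Metric.ball x (R + ρ)) / ENNReal.ofReal τ with hS
  have hSf : S ≠ ⊤ := by
    apply ENNReal.div_ne_top
    · exact ENNReal.mul_ne_top (ENNReal.mul_ne_top (by norm_num) (by simp))
        (hdbl.1 x _ (by positivity)).2.ne
    · simpa using hτ
  have hsumS : ∑ i ∈ I.filter (fun i => |t - g i| ≤ o i), ENNReal.ofReal (2 * o i) ≤ S := by
    refine hsum.trans ?_
    rw [hS]
    gcongr
    have hi : ∀ i ∈ I, 4 * ENNReal.ofReal (o i) ^ 2 ≤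
        4 * (CD : ℝ≥0∞) ^ 2 * μ (Metric.ball i (ε / 2)) := by
      intro i _
      rw [ho]
      simp only
      rw [ENNReal.ofReal_toReal (hbt i), ← ENNReal.rpow_natCast, ← ENNReal.rpow_mul]
      norm_num
      rw [mul_assoc]
      gcongr
      have h1 := hdbl.2 i ε hε
      have h2 := hdbl.2 i (ε/2) (by positivity)
      rw [show 2 * (ε/2) = ε by ring] at h2
      calc _ ≤ (CD:ℝ≥0∞) * (CD * μ (Metric.ball i (ε/2))) := h1.trans (mul_le_mul_right h2 _)
        _ = _ := by ring
    refine (Finset.sum_le_sum hi).trans ?_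
    rw [← Finset.mul_sum]
    gcongr
    rw [← measure_biUnion_finset]
    · apply measure_mono
      intro y hy
      simp only [mem_iUnion] at hy
      obtain ⟨i, hi, hy⟩ := hy
      have h1 := hIF i hi
      rw [Metric.mem_closedBall] at h1
      rw [Metric.mem_ball] at *
      have := dist_triangle y i x
      have := min_le_right δ ρ
      linarith
    · intro i hi j hj hij
      have := hIs i hi j hj hij
      exact Metric.ball_disjoint_ball (by linarith)
    · intro i _
      exact measurableSet_ball
  intro K hK hKR hKt a ha b hb
  set u : X → ℝ := fun y => (min (qDelta μ 2 δ a y) (S + 1)).toReal with hu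
  have hS1 : S + 1 ≠ ⊤ := ENNReal.add_ne_top.2 ⟨hSf, by simp⟩
  have hul := trunc_lip hfin (δ := δ) (fun y => qDelta μ 2 δ a y)
    (fun y y' h => qDelta_append μ 2 a y y' h) (S + 1) hS1
  have huc : Continuous u := trunc_cont hsm hδ u hul
  have h1 := length_bound (I.filter (fun i => |t - g i| ≤ o i)) o u hK huc.continuousOn
    (by
      intro y hy
      obtain ⟨i, hi, hiy⟩ := hIc y (hKR hy)
      refine ⟨i, Finset.mem_filter.2 ⟨hi, ?_⟩, hoo u hul i y hiy⟩
      have := hoo g hg i y hiy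
      rwa [hKt y hy] at this) ha hb
  have hua : u a = 0 := by simp [hu, qDelta_self]
  rw [hua, sub_zero, hu] at h1
  simp only at h1
  rw [ENNReal.ofReal_toReal (lt_of_le_of_lt (min_le_right _ _) hS1.lt_top).ne] at h1
  have h2 := h1.trans hsumS
  rcases min_le_iff.1 h2 with h | h
  · exact h
  · exfalso
    exact absurd h (not_le.2 (ENNReal.lt_add_right hSf one_ne_zero))

theorem Kdelta [BorelSpace X] [ConnectedSpace X] {CD : ℝ≥0} {μ : Measure X} {lam : ℝ}
    (hlam : 1 ≤ lam) (hLLC : IsLLC X lam)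
    (hdbl : IsDoublingWith μ CD)
    (hsm : ∀ (a : X) (η : ℝ≥0∞), 0 < η →
      ∃ ε > 0, ∀ y, dist a y ≤ ε → μ (pairBall a y) ^ (1 / 2 : ℝ) ≤ η)
    (hfin : ∀ a b : X, μ (pairBall a b) ≠ ⊤) {δ : ℝ} (hδ : 0 < δ) {x p0 : X} {r R1 R2 R7 ρ τ : ℝ}
    (hr : 0 < r) (hρ : 0 < ρ) (hτ : 0 < τ) (h1 : lam * r ≤ R1) (h12 : R1 < R2)
    (h27 : R2 < R7 / lam) (h27' : R2 < R7)
    (hc : IsCompact (Metric.closedBall x R2)) (hp0 : p0 ∉ Metric.closedBall x R7)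
    (htop : ∀ E : Set X, IsCompact E → IsConnected E → E ⊆ Metric.closedBall x R7 →
      ∃ K, K ⊆ E ∧ K ⊆ closure Eᶜ ∧ IsCompact K ∧ IsPreconnected K ∧
        ∀ C, IsPreconnected C → p0 ∈ C → (C ∩ interior E).Nonempty → (C ∩ K).Nonempty)
    (hlow : ∀ a ∈ Metric.closedBall x R1, ∀ b ∉ Metric.ball x R2,
      ENNReal.ofReal τ ≤ qDelta μ 2 δ a b) :
    ∃ K, K ⊆ Metric.closedBall x R2 ∧ K ⊆ (Metric.ball x R1)ᶜ ∧ IsPreconnected K ∧ K.Nonempty ∧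
      (∀ C, IsPreconnected C → (C ∩ Metric.ball x r).Nonempty →
        (C ∩ (Metric.closedBall x R7)ᶜ).Nonempty → (C ∩ K).Nonempty) ∧
      ∀ a ∈ K, ∀ b ∈ K, qDelta μ 2 δ a b ≤
        4 * (CD : ℝ≥0∞) ^ 2 * μ (Metric.ball x (R2 + ρ)) / ENNReal.ofReal τ := by
  have hlr : 0 < lam * r := by positivity
  have hlr' : r ≤ lam * r := by nlinarith
  set h : X → ℝ≥0∞ := fun y => ⨅ a ∈ Metric.closedBall x R1, qDelta μ 2 δ a y with hh
  have hhl : ∀ y y', dist y y' ≤ δ → h y' ≤ h y + μ (pairBall y y') ^ (1 / 2 : ℝ) := by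
    intro y y' hd
    simp only [hh, ENNReal.iInf_add]
    refine le_iInf₂ fun a ha => ?_
    exact (iInf₂_le a ha).trans (qDelta_append μ 2 a y y' hd)
  set g : X → ℝ := fun y => (min (h y) (ENNReal.ofReal τ)).toReal with hg
  have hgl := trunc_lip hfin (δ := δ) h hhl (ENNReal.ofReal τ) ENNReal.ofReal_ne_top
  have hgc : Continuous g := trunc_cont hsm hδ g hgl
  have hg0 : ∀ y ∈ Metric.closedBall x R1, g y = 0 := by
    intro y hy
    have : h y = 0 := by
      apply le_antisymm _ bot_le
      exact (iInf₂_le y hy).trans (qDelta_self μ 2 δ y).le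
    simp [hg, this]
  have hgτ : ∀ y ∉ Metric.ball x R2, g y = τ := by
    intro y hy
    have : ENNReal.ofReal τ ≤ h y := le_iInf₂ fun a ha => hlow a ha y hy
    simp only [hg]
    rw [min_eq_right this, ENNReal.toReal_ofReal hτ.le]
  obtain ⟨t, ⟨ht0, htτ⟩, hlev⟩ := level_set hdbl hsm hfin hδ (x := x) (R := R2) (ρ := ρ) (τ := τ)
    (by linarith) hρ hτ hc g hgl
  set E := connectedComponentIn {y | g y ≤ t} x with hE
  have hxt : x ∈ {y | g y ≤ t} := by
    change g x ≤ t
    rw [hg0 x (Metric.mem_closedBall_self (by linarith))]; exact ht0.le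
  have hsub : {y | g y ≤ t} ⊆ Metric.ball x R2 := by
    intro y hy
    by_contra hn
    have := hgτ y hn
    have hy : g y ≤ t := hy
    linarith
  have hEsub : E ⊆ {y | g y ≤ t} := connectedComponentIn_subset _ _
  have hEc : IsConnected E := isConnected_connectedComponentIn_iff.2 hxt
  have hEcl : IsClosed E := by
    have hcl : IsClosed {y | g y ≤ t} := isClosed_le hgc continuous_const
    apply isClosed_of_closure_subset
    exact hEc.isPreconnected.closure.subset_connectedComponentIn
      (subset_closure (mem_connectedComponentIn hxt)) (closure_minimal hEsub hcl)
  have hEcpt : IsCompact E := hc.of_isClosed_subset hEcl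
    ((hEsub.trans hsub).trans Metric.ball_subset_closedBall)
  have hBE : Metric.ball x r ⊆ E := by
    intro y hy
    obtain ⟨L, hL, hLs, hxL, hyL⟩ := (hLLC x r hr).1 x (Metric.mem_ball_self hr) y hy
    refine hL.2.isPreconnected.subset_connectedComponentIn hxL ?_ hyL
    intro z hz
    change g z ≤ t
    rw [hg0 z (Metric.ball_subset_closedBall (Metric.ball_subset_ball h1 (hLs hz)))]
    exact ht0.le
  have hBI : Metric.ball x r ⊆ interior E := interior_maximal hBE isOpen_ball
  obtain ⟨K, hKE, hKcl, -, hKp, hKm⟩ := htop E hEcpt hEc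
    (((hEsub.trans hsub).trans Metric.ball_subset_closedBall).trans
      (Metric.closedBall_subset_closedBall h27'.le))
  have hKt : ∀ y ∈ K, g y = t := by
    intro y hy
    by_contra hne
    have hlt : g y < t := lt_of_le_of_ne (hEsub (hKE hy)) hne
    have hn : {z | g z < t} ∈ 𝓝 y := (isOpen_lt hgc continuous_const).mem_nhds hlt
    obtain ⟨ε, hε, hεs⟩ := Metric.mem_nhds_iff.1 hn
    have hl0 : 0 < lam := by linarith
    have hin : Metric.ball y (ε / lam) ⊆ E := by
      intro z hz
      obtain ⟨L, hL, hLs, hyL, hzL⟩ := (hLLC y (ε / lam) (by positivity)).1 y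
        (Metric.mem_ball_self (by positivity)) z hz
      rw [mul_div_cancel₀ _ hl0.ne'] at hLs
      have hLsub : L ⊆ {y | g y ≤ t} := fun w hw => (show g w < t from hεs (hLs hw)).le
      have := hL.2.isPreconnected.subset_connectedComponentIn hyL hLsub hzL
      rwa [hE, connectedComponentIn_eq (hKE hy)]
    have h3 := hKcl hy
    rw [closure_compl] at h3
    exact h3 (mem_interior.2 ⟨_, hin, isOpen_ball, Metric.mem_ball_self (by positivity)⟩)
  have hKR2 : K ⊆ Metric.closedBall x R2 :=
    (hKE.trans (hEsub.trans hsub)).trans Metric.ball_subset_closedBall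
  refine ⟨K, hKR2, ?_, hKp, ?_, ?_, hlev K hKp hKR2 hKt⟩
  · intro y hy hyb
    have e1 := hKt y hy
    rw [hg0 y (Metric.ball_subset_closedBall hyb)] at e1
    linarith
  · obtain ⟨y, hy⟩ := hKm univ isPreconnected_univ (mem_univ _)
      ⟨x, mem_univ _, hBI (Metric.mem_ball_self hr)⟩
    exact ⟨y, hy.2⟩
  · rintro C hC ⟨p, hpC, hp⟩ ⟨p', hp'C, hp'⟩
    obtain ⟨L, hL, hLs, hp'L, hp0L⟩ := (hLLC x R7 (by linarith)).2 p' p0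
      (fun h => hp' (Metric.ball_subset_closedBall h))
      (fun h => hp0 (Metric.ball_subset_closedBall h))
    obtain ⟨y, hy, hyK⟩ := hKm (C ∪ L) (hC.union p' hp'C hp'L hL.2.isPreconnected)
      (Or.inr hp0L) ⟨p, Or.inl hpC, hBI hp⟩
    rcases hy with hy | hy
    · exact ⟨y, hy, hyK⟩
    · exact absurd (Metric.closedBall_subset_ball h27 (hKR2 hyK)) (hLs hy)

theorem limit_miss {X : Type*} [TopologicalSpace X] (U : Ultrafilter ℝ) (Kf : ℝ → Set X)
    {C : Set X} (hC : IsCompact C)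
    (hm : ∀ y ∈ C, ¬ ∀ O ∈ 𝓝 y, ∀ᶠ δ in (U : Filter ℝ), (Kf δ ∩ O).Nonempty) :
    ∀ᶠ δ in (U : Filter ℝ), ¬ (Kf δ ∩ C).Nonempty := by
  refine hC.induction_on (p := fun s => ∀ᶠ δ in (U : Filter ℝ), ¬ (Kf δ ∩ s).Nonempty) ?_ ?_ ?_ ?_
  · simp
  · intro s t hst ht
    filter_upwards [ht] with δ hδ h
    exact hδ (h.mono (inter_subset_inter_right _ hst))
  · intro s t hs ht
    filter_upwards [hs, ht] with δ h1 h2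
    rintro ⟨y, hy, hy' | hy'⟩
    · exact h1 ⟨y, hy, hy'⟩
    · exact h2 ⟨y, hy, hy'⟩
  · intro y hy
    have := hm y hy
    simp only [not_forall] at this
    obtain ⟨O, hO, h⟩ := this
    refine ⟨O, mem_nhdsWithin_of_mem_nhds hO, ?_⟩
    exact Ultrafilter.eventually_not.2 h

theorem limit_cont {X : Type*} [TopologicalSpace X] [T2Space X] (U : Ultrafilter ℝ)
    (Kf : ℝ → Set X) {F : Set X} (hF : IsCompact F)
    (h1 : ∀ᶠ δ in (U : Filter ℝ), Kf δ ⊆ F) (h2 : ∀ᶠ δ in (U : Filter ℝ), IsPreconnected (Kf δ))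
    (h3 : ∀ᶠ δ in (U : Filter ℝ), (Kf δ).Nonempty) :
    IsContinuum {y | ∀ O ∈ 𝓝 y, ∀ᶠ δ in (U : Filter ℝ), (Kf δ ∩ O).Nonempty} ∧
    {y | ∀ O ∈ 𝓝 y, ∀ᶠ δ in (U : Filter ℝ), (Kf δ ∩ O).Nonempty} ⊆ F := by
  set K := {y | ∀ O ∈ 𝓝 y, ∀ᶠ δ in (U : Filter ℝ), (Kf δ ∩ O).Nonempty} with hK
  have hKF : K ⊆ F := by
    intro y hy
    by_contra hn
    have := hy Fᶜ (hF.isClosed.isOpen_compl.mem_nhds hn)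
    obtain ⟨δ, h, h'⟩ := (this.and h1).exists
    obtain ⟨z, hz, hz'⟩ := h
    exact hz' (h' hz)
  have hKcl : IsClosed K := by
    rw [← isOpen_compl_iff, isOpen_iff_mem_nhds]
    intro y hy
    have hy : ¬ ∀ O ∈ 𝓝 y, ∀ᶠ δ in (U : Filter ℝ), (Kf δ ∩ O).Nonempty := hy
    simp only [not_forall] at hy
    obtain ⟨O, hO, h⟩ := hy
    filter_upwards [eventually_mem_nhds_iff.2 hO] with z hz hzK
    have := hzK O hz
    exact h this
  have hKc : IsCompact K := hF.of_isClosed_subset hKcl hKF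
  refine ⟨⟨hKc, ?_, ?_⟩, hKF⟩
  · by_contra hn
    rw [not_nonempty_iff_eq_empty] at hn
    have := limit_miss U Kf hF (fun y _ h => by
      have : y ∈ K := h
      rw [hn] at this; exact this)
    obtain ⟨δ, ⟨ha, hb⟩, ⟨z, hz⟩⟩ := ((this.and h1).and h3).exists
    exact ha ⟨z, hz, hb hz⟩
  · rw [isPreconnected_closed_iff]
    intro A B hA hB hAB hKA hKB
    by_contra hn
    rw [not_nonempty_iff_eq_empty] at hn
    have hd : Disjoint (K ∩ A) (K ∩ B) := by
      rw [Set.disjoint_iff]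
      rintro y ⟨⟨hy, hyA⟩, -, hyB⟩
      rw [← hn]; exact ⟨hy, hyA, hyB⟩
    obtain ⟨V, W, hV, hW, hAV, hBW, hVW⟩ :=
      SeparatedNhds.of_isCompact_isCompact (hKc.inter_right hA) (hKc.inter_right hB) hd
    have hmiss := limit_miss U Kf (hF.diff (hV.union hW)) (fun y hy h => by
      have hyK : y ∈ K := h
      apply hy.2
      rcases hAB hyK with h | h
      · exact Or.inl (hAV ⟨hyK, h⟩)
      · exact Or.inr (hBW ⟨hyK, h⟩))
    obtain ⟨a, haK, haA⟩ := hKA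
    obtain ⟨b, hbK, hbB⟩ := hKB
    have e1 := haK V (hV.mem_nhds (hAV ⟨haK, haA⟩))
    have e2 := hbK W (hW.mem_nhds (hBW ⟨hbK, hbB⟩))
    obtain ⟨δ, ⟨⟨⟨⟨f1, f2⟩, f3⟩, f4⟩, f5⟩⟩ := ((((hmiss.and h1).and h2).and e1).and e2).exists
    have hsub : Kf δ ⊆ V ∪ W := by
      intro z hz
      by_contra hzn
      exact f1 ⟨z, hz, f2 hz, hzn⟩
    obtain ⟨z, -, hzV, hzW⟩ := f3 V W hV hW hsub f4 f5
    exact Set.disjoint_left.1 hVW hzV hzW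

theorem llc_join {lam : ℝ} (hlam : 1 ≤ lam) (hLLC : IsLLC X lam) {K : Set X} (hK : IsClosed K)
    {p p' : X} (hp : p ∈ Kᶜ) (hp' : p' ∈ Kᶜ)
    (h : connectedComponentIn Kᶜ p = connectedComponentIn Kᶜ p') :
    ∃ C, IsContinuum C ∧ C ⊆ Kᶜ ∧ p ∈ C ∧ p' ∈ C := by
  have hl0 : 0 < lam := by linarith
  set A := {y | ∃ C, IsContinuum C ∧ C ⊆ Kᶜ ∧ p ∈ C ∧ y ∈ C} with hA
  have hloc : ∀ y ∈ Kᶜ, ∃ ε > 0, Metric.ball y ε ⊆ Kᶜ ∧ ∀ z ∈ Metric.ball y ε,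
      ∃ C, IsContinuum C ∧ C ⊆ Kᶜ ∧ y ∈ C ∧ z ∈ C := by
    intro y hy
    obtain ⟨ε, hε, hs⟩ := Metric.isOpen_iff.1 hK.isOpen_compl y hy
    refine ⟨ε / lam, by positivity,
      (Metric.ball_subset_ball (div_le_self hε.le hlam)).trans hs, fun z hz => ?_⟩
    obtain ⟨C, hC, hCs, h1, h2⟩ := (hLLC y (ε / lam) (by positivity)).1 y
      (Metric.mem_ball_self (by positivity)) z hz
    rw [mul_div_cancel₀ _ hl0.ne'] at hCs
    exact ⟨C, hC, hCs.trans hs, h1, h2⟩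
  have huni : ∀ {C D : Set X} {y : X}, IsContinuum C → IsContinuum D → y ∈ C → y ∈ D →
      IsContinuum (C ∪ D) := by
    intro C D y hC hD h1 h2
    exact ⟨hC.1.union hD.1, IsConnected.union ⟨y, h1, h2⟩ hC.2 hD.2⟩
  have hAo : IsOpen A := by
    rw [Metric.isOpen_iff]
    rintro y ⟨C, hC, hCs, h1, h2⟩
    obtain ⟨ε, hε, -, hj⟩ := hloc y (hCs h2)
    refine ⟨ε, hε, fun z hz => ?_⟩
    obtain ⟨D, hD, hDs, h3, h4⟩ := hj z hz
    exact ⟨C ∪ D, huni hC hD h2 h3, union_subset hCs hDs, Or.inl h1, Or.inr h4⟩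
  have hBo : IsOpen (Kᶜ \ A) := by
    rw [Metric.isOpen_iff]
    rintro y ⟨hy, hyA⟩
    obtain ⟨ε, hε, hsub, hj⟩ := hloc y hy
    refine ⟨ε, hε, fun z hz => ⟨hsub hz, ?_⟩⟩
    rintro ⟨C, hC, hCs, h1, h2⟩
    obtain ⟨D, hD, hDs, h3, h4⟩ := hj z hz
    exact hyA ⟨C ∪ D, huni hC hD h2 h4, union_subset hCs hDs, Or.inl h1, Or.inr h3⟩
  by_contra hcon
  have hpA : p ∈ A := ⟨{p}, ⟨isCompact_singleton, isConnected_singleton⟩,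
    singleton_subset_iff.2 hp, rfl, rfl⟩
  have hp'A : p' ∉ A := hcon
  obtain ⟨z, -, hz1, hz2⟩ := (isPreconnected_connectedComponentIn (F := Kᶜ) (x := p)) A (Kᶜ \ A)
    hAo hBo (fun z hz => by
      by_cases hzA : z ∈ A
      · exact Or.inl hzA
      · exact Or.inr ⟨connectedComponentIn_subset _ _ hz, hzA⟩)
    ⟨p, mem_connectedComponentIn hp, hpA⟩
    ⟨p', by rw [h]; exact mem_connectedComponentIn hp', hp', hp'A⟩
  exact hz2.2 hz1

theorem limit_diam {μ : Measure X} (hsm : ∀ (a : X) (η : ℝ≥0∞), 0 < η →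
      ∃ ε > 0, ∀ y, dist a y ≤ ε → μ (pairBall a y) ^ (1 / 2 : ℝ) ≤ η)
    (U : Ultrafilter ℝ) (hU : (U : Filter ℝ) ≤ 𝓝[>] 0) (Kf : ℝ → Set X) (S : ℝ≥0∞)
    (hS : ∀ᶠ δ in (U : Filter ℝ), ∀ a ∈ Kf δ, ∀ b ∈ Kf δ, qDelta μ 2 δ a b ≤ S) {a b : X}
    (ha : ∀ O ∈ 𝓝 a, ∀ᶠ δ in (U : Filter ℝ), (Kf δ ∩ O).Nonempty)
    (hb : ∀ O ∈ 𝓝 b, ∀ᶠ δ in (U : Filter ℝ), (Kf δ ∩ O).Nonempty) :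
    qmu μ 2 a b ≤ S := by
  apply qmu_le
  intro δ1 hδ1
  apply ENNReal.le_of_forall_pos_le_add
  intro ε hε _
  have hη : (0:ℝ≥0∞) < (ε : ℝ≥0∞) / 2 := ENNReal.half_pos (by exact_mod_cast hε.ne')
  obtain ⟨εa, ha0, hea⟩ := hsm a _ hη
  obtain ⟨εb, hb0, heb⟩ := hsm b _ hη
  have e1 := ha (Metric.ball a (min εa δ1)) (Metric.ball_mem_nhds _ (by positivity))
  have e2 := hb (Metric.ball b (min εb δ1)) (Metric.ball_mem_nhds _ (by positivity))
  have e3 : ∀ᶠ δ in (U : Filter ℝ), δ ≤ δ1 := by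
    apply hU
    apply mem_nhdsWithin_of_mem_nhds
    exact Iic_mem_nhds hδ1
  obtain ⟨δ, ⟨⟨⟨⟨a', ha', haa⟩, ⟨b', hb', hbb⟩⟩, hle⟩, hq⟩⟩ := (((e1.and e2).and e3).and hS).exists
  rw [Metric.mem_ball, dist_comm] at haa hbb
  have q1 := qDelta_prepend μ 2 (δ := δ1) a a' b (haa.le.trans (min_le_right _ _))
  have q2 := qDelta_append μ 2 (δ := δ1) a' b' b
    (by rw [dist_comm]; exact hbb.le.trans (min_le_right _ _))
  have q3 := hea a' (haa.le.trans (min_le_left _ _))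
  have q4 := heb b' (hbb.le.trans (min_le_left _ _))
  rw [pairBall_comm'] at q4
  have q5 := (qDelta_anti μ 2 hle a' b').trans (hq a' ha' b' hb')
  calc qDelta μ 2 δ1 a b ≤ (ε:ℝ≥0∞) / 2 + (S + (ε:ℝ≥0∞) / 2) :=
        q1.trans (add_le_add q3 (q2.trans (add_le_add q5 q4)))
    _ = S + ((ε:ℝ≥0∞) / 2 + (ε:ℝ≥0∞) / 2) := by ring
    _ = _ := by rw [ENNReal.add_halves]

theorem top_package {X : Type*} [TopologicalSpace X] [T2Space X] {Ω : Set ↥Sphere2}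
    (hΩ : IsOpen Ω) (h : X ≃ₜ ↥Ω) {U F : Set X} (hU : IsTopDisk U) (hF : IsCompact F)
    (hFU : F ⊆ U) (hFn : F.Nonempty) :
    ∃ p0, p0 ∉ F ∧ ∀ E : Set X, IsCompact E → IsConnected E → E ⊆ F →
      ∃ K, K ⊆ E ∧ K ⊆ closure Eᶜ ∧ IsCompact K ∧ IsPreconnected K ∧
        ∀ C, IsPreconnected C → p0 ∈ C → (C ∩ interior E).Nonempty → (C ∩ K).Nonempty := by
  obtain ⟨e⟩ := hU
  have hF' : IsCompact ((↑) ⁻¹' F : Set U) :=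
    (IsInducing.subtypeVal.isCompact_preimage_iff (by simpa using hFU)).2 hF
  obtain ⟨x, hx⟩ := hFn
  have hcont : Continuous fun u : U => ‖((e u : ↥(Metric.ball (0:ℂ) 1)) : ℂ)‖ := by fun_prop
  obtain ⟨u0, hu0, hmax⟩ := hF'.exists_isMaxOn ⟨⟨x, hFU hx⟩, hx⟩ hcont.continuousOn
  set ρ0 := ‖((e u0 : ↥(Metric.ball (0:ℂ) 1)) : ℂ)‖ with hρ0
  have hρ1 : ρ0 < 1 := mem_ball_zero_iff.1 (e u0).2
  have hρn : 0 ≤ ρ0 := norm_nonneg _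
  set ρ := (1 + ρ0) / 2 with hρ
  have hlt : ρ < 1 := by rw [hρ]; linarith
  have hpos : 0 < ρ := by rw [hρ]; linarith
  have hle : ρ0 ≤ ρ := by rw [hρ]; linarith
  have hmem : ∀ z : Metric.closedBall (0:ℂ) ρ, (z : ℂ) ∈ Metric.ball (0:ℂ) 1 := fun z =>
    Metric.closedBall_subset_ball hlt z.2
  set j : Metric.closedBall (0:ℂ) ρ → X := fun z => ((e.symm ⟨z, hmem z⟩ : U) : X) with hj
  have hjc : Continuous j := by
    apply continuous_subtype_val.comp
    apply e.symm.continuous.comp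
    exact Continuous.subtype_mk continuous_subtype_val _
  have hji : Function.Injective j := by
    intro z w hzw
    have := e.symm.injective (Subtype.ext hzw)
    exact Subtype.ext (congrArg (fun v : ↥(Metric.ball (0:ℂ) 1) => (v : ℂ)) this)
  have hFr : F ⊆ range j := by
    intro y hy
    have h1 : ‖((e ⟨y, hFU hy⟩ : ↥(Metric.ball (0:ℂ) 1)) : ℂ)‖ ≤ ρ0 :=
      hmax (show (⟨y, hFU hy⟩ : U) ∈ _ from hy)
    refine ⟨⟨(e ⟨y, hFU hy⟩ : ℂ), by simpa using h1.trans hle⟩, ?_⟩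
    simp [hj]
  have hqm : (((1 + ρ) / 2 : ℝ) : ℂ) ∈ Metric.ball (0:ℂ) 1 := by
    rw [mem_ball_zero_iff, Complex.norm_real, Real.norm_eq_abs, abs_of_pos (by linarith)]
    linarith
  set p0 : X := ((e.symm ⟨(((1 + ρ) / 2 : ℝ) : ℂ), hqm⟩ : U) : X) with hp0
  have hp0r : p0 ∉ range j := by
    rintro ⟨z, hz⟩
    have h1 := e.symm.injective (Subtype.ext hz)
    have h2 : (z : ℂ) = (((1 + ρ) / 2 : ℝ) : ℂ) :=
      congrArg (fun v : ↥(Metric.ball (0:ℂ) 1) => (v : ℂ)) h1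
    have h3 := z.2
    rw [h2, mem_closedBall_zero_iff, Complex.norm_real, Real.norm_eq_abs,
      abs_of_pos (by linarith)] at h3
    linarith
  obtain ⟨φ, hφ⟩ := aux_chart hΩ h p0
  refine ⟨p0, fun hp => hp0r (hFr hp), fun E hE hEc hEF => ?_⟩
  exact aux_top φ p0 hφ ρ hpos j hjc hji hp0r E hE hEc (hEF.trans hFr)

theorem dbl_iter {CD : ℝ≥0} {μ : Measure X} (hdbl : IsDoublingWith μ CD) (x : X) {r : ℝ}
    (hr : 0 < r) (n : ℕ) :
    μ (Metric.ball x (2 ^ n * r)) ≤ (CD : ℝ≥0∞) ^ n * μ (Metric.ball x r) := by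
  induction n with
  | zero => simp
  | succ n ih =>
    have := hdbl.2 x (2 ^ n * r) (by positivity)
    rw [show (2:ℝ) ^ (n + 1) * r = 2 * (2 ^ n * r) by ring]
    calc _ ≤ _ := this
      _ ≤ (CD : ℝ≥0∞) * ((CD : ℝ≥0∞) ^ n * μ (Metric.ball x r)) := mul_le_mul_right ih _
      _ = _ := by ring

theorem ell_le {lam : ℝ} (hlam : 1 ≤ lam) : lam ≤ 2 ^ ellOf lam := by
  have h1 : Real.logb 2 lam ≤ (ellOf lam : ℝ) := by
    unfold ellOf
    have h2 : (Int.ceil (Real.logb 2 lam)) ≤ ((Int.ceil (Real.logb 2 lam)).toNat : ℤ) :=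
      Int.self_le_toNat _
    exact (Int.le_ceil _).trans (by exact_mod_cast h2)
  have h3 := (Real.logb_le_iff_le_rpow (by norm_num : (1:ℝ) < 2) (by linarith)).1 h1
  rwa [Real.rpow_natCast] at h3

end

theorem statement8
    {X : Type*} [MetricSpace X] [MeasurableSpace X] [BorelSpace X]
    (lam : ℝ) (CD CW : ℝ≥0) (M : ℕ) (μ : Measure X)
    (hlam : 1 ≤ lam) (hLLC : IsLLC X lam)
    (hhom : ∃ Ω₀ : Set ↥Sphere2, IsCircleDomainS2 Ω₀ ∧ Nonempty (X ≃ₜ ↥Ω₀))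
    (hcpt : CompactSpace (Completion X))
    (hfin : (residComps X).Finite) (hM : (residComps X).ncard = M)
    (hreg : μ.Regular) (hdbl : IsDoublingWith μ CD) (hw : IsWMDM μ 2 CW) :
    ∀ (x : X) (r : ℝ), 0 < r →
      IsCompact (Metric.closedBall x ((2 * lam) ^ 7 * r)) →
      (∃ U : Set X, IsTopDisk U ∧ Metric.closedBall x ((2 * lam) ^ 7 * r) ⊆ U) →
      ∃ K : Set X, IsContinuum K ∧
        K ⊆ Metric.closedBall x ((2 * lam) ^ 6 * r) \ Metric.ball x (2 * lam * r) ∧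
        SeparatesSets K (Metric.ball x r) (Metric.closedBall x ((2 * lam) ^ 7 * r))ᶜ ∧
        (⨆ a ∈ K, ⨆ b ∈ K, qmu μ 2 a b) ≤
          8 * (CW : ℝ≥0∞) * (CD : ℝ≥0∞) ^ (12 + 4 * ellOf lam) *
            μ (Metric.ball x r) ^ (1 / 2 : ℝ) := by
  intro x r hr hcomp hU
  obtain ⟨U, hU, hFU⟩ := hU
  obtain ⟨Ω, ⟨hΩ, -, -⟩, ⟨hX⟩⟩ := hhom
  set R7 := (2 * lam) ^ 7 * r with hR7
  have hl0 : 0 < lam := by linarith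
  have hlr : r ≤ lam * r := by nlinarith
  have hlr0 : 0 < lam * r := by positivity
  have h6 : 1 ≤ lam ^ 5 := one_le_pow₀ hlam
  have h66 : lam * r ≤ lam ^ 6 * r := by
    have : lam ^ 6 * r = lam ^ 5 * (lam * r) := by ring
    nlinarith
  have h67 : lam ^ 6 * r ≤ lam ^ 7 * r := by
    have : lam ^ 7 * r = lam * (lam ^ 6 * r) := by ring
    have : 0 < lam ^ 6 * r := by positivity
    nlinarith
  have hR7e : R7 = 128 * (lam ^ 7 * r) := by rw [hR7]; ring
  have hR7l : R7 / lam = 128 * (lam ^ 6 * r) := by rw [hR7]; field_simp; ring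
  have hR6e : (2 * lam) ^ 6 * r = 64 * (lam ^ 6 * r) := by ring
  obtain ⟨p0, hp0, htop⟩ := top_package hΩ hX hU hcomp hFU
    ⟨x, Metric.mem_closedBall_self (by positivity)⟩
  have hxp : x ≠ p0 := by
    rintro rfl
    exact hp0 (Metric.mem_closedBall_self (by positivity))
  haveI : Nontrivial X := ⟨⟨x, p0, hxp⟩⟩
  haveI : Nonempty X := ⟨x⟩
  haveI : ConnectedSpace X := llc_connected hLLC
  have hsm : ∀ (a : X) (η : ℝ≥0∞), 0 < η →
      ∃ ε > 0, ∀ y, dist a y ≤ ε → μ (pairBall a y) ^ (1 / 2 : ℝ) ≤ η := fun a η hη =>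
    small_pairBall hdbl a (no_atom hdbl a) η hη
  have hpf : ∀ a b : X, μ (pairBall a b) ≠ ⊤ := by
    intro a b
    have h1 : dist a b ≤ dist a b + 1 := by linarith
    have h2 : 0 < 2 * (dist a b + 1) := by have := dist_nonneg (x := a) (y := b); linarith
    exact ((measure_mono (pairBall_subset a b h1)).trans_lt (hdbl.1 a _ h2).2).ne
  obtain ⟨hB0, hBt⟩ := hdbl.1 x r hr
  set m := μ (Metric.ball x r) ^ (1 / 2 : ℝ) with hm
  have hmm : m * m = μ (Metric.ball x r) := by
    rw [hm, ← ENNReal.rpow_add_of_nonneg _ _ (by norm_num) (by norm_num)]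
    norm_num
  have hm0 : m ≠ 0 := (ENNReal.rpow_pos hB0 hBt.ne).ne'
  have hmt : m ≠ ⊤ := ENNReal.rpow_ne_top_of_nonneg (by norm_num) hBt.ne
  have hCW : (CW : ℝ≥0∞) ≠ 0 := by
    intro h0
    have h1 := hw x p0
    rw [h0, zero_mul] at h1
    have h2 : 0 < μ (pairBall x p0) :=
      (hdbl.1 x _ (dist_pos.2 hxp)).1.trans_le (measure_mono subset_union_left)
    exact absurd h1 (not_le.2 (ENNReal.rpow_pos h2 (hpf _ _)))
  have hCD : (1 : ℝ≥0∞) ≤ CD := by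
    have h1 := (measure_mono (Metric.ball_subset_ball (x := x) (by linarith : r ≤ 2 * r))).trans
      (hdbl.2 x r hr)
    by_contra hlt
    rw [not_le] at hlt
    have h2 := ENNReal.mul_lt_mul_left hB0.ne' hBt.ne hlt
    rw [one_mul] at h2
    exact absurd h1 (not_le.2 h2)
  set T0 := m / CW with hT0
  have hT00 : T0 ≠ 0 := ENNReal.div_ne_zero.2 ⟨hm0, ENNReal.coe_ne_top⟩
  have hT0t : T0 ≠ ⊤ := ENNReal.div_ne_top hmt hCW
  set τ := (T0 / 2).toReal with hτd
  have hT2t : T0 / 2 ≠ ⊤ := ENNReal.div_ne_top hT0t (by norm_num)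
  have hτe : ENNReal.ofReal τ = T0 / 2 := ENNReal.ofReal_toReal hT2t
  have hτ : 0 < τ := ENNReal.toReal_pos (ENNReal.half_pos hT00).ne' hT2t
  have hτm : 2 * (CW : ℝ≥0∞) * ENNReal.ofReal τ = m := by
    rw [hτe]
    calc 2 * (CW : ℝ≥0∞) * (T0 / 2) = (CW : ℝ≥0∞) * (2 * (T0 / 2)) := by ring
      _ = CW * T0 := by rw [ENNReal.mul_div_cancel (by norm_num) (by norm_num)]
      _ = m := ENNReal.mul_div_cancel hCW ENNReal.coe_ne_top
  have hqlow : ∀ a ∈ Metric.closedBall x (2 * (lam * r)), ∀ b ∉ Metric.ball x (6 * (lam * r)),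
      ENNReal.ofReal τ < qmu μ 2 a b := by
    intro a ha b hb
    rw [hτe]
    refine (ENNReal.half_lt_self hT00 hT0t).trans_le ?_
    apply ENNReal.div_le_of_le_mul'
    refine le_trans ?_ (hw a b)
    apply ENNReal.rpow_le_rpow (measure_mono _) (by norm_num)
    refine subset_trans ?_ subset_union_left
    intro z hz
    rw [Metric.mem_closedBall] at ha
    simp only [Metric.mem_ball, not_lt] at hb hz ⊢
    have t1 := dist_triangle b a x
    have t2 := dist_triangle z x a
    rw [dist_comm x a] at t2
    rw [dist_comm b a] at t1
    linarith
  obtain ⟨δ0, hδ0, -, hlow⟩ := uniform_lower hsm x (R1 := 2 * (lam * r)) (R2 := 6 * (lam * r))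
    (R3 := 7 * (lam * r)) (by linarith) (by linarith)
    (hcomp.of_isClosed_subset isClosed_closedBall
      (Metric.closedBall_subset_closedBall (by linarith))) (ENNReal.ofReal τ) hqlow
  have hc6 : IsCompact (Metric.closedBall x (6 * (lam * r))) :=
    hcomp.of_isClosed_subset isClosed_closedBall
      (Metric.closedBall_subset_closedBall (by linarith))
  have hex : ∀ δ : ℝ, δ ∈ Ioc 0 δ0 → _ := fun δ hδ =>
    Kdelta hlam hLLC hdbl hsm hpf hδ.1 (x := x) (p0 := p0) (r := r) (R1 := 2 * (lam * r))
      (R2 := 6 * (lam * r)) (R7 := R7) (ρ := 2 * (lam * r)) (τ := τ) hr (by linarith) hτ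
      (by linarith) (by linarith) (by linarith) (by linarith) hc6 hp0 htop
      (fun a ha b hb => (hlow a ha b hb).trans (qDelta_anti μ 2 hδ.2 a b))
  choose! Kf k1 k2 k3 k4 k5 k6 using hex
  set 𝒰 := Ultrafilter.of (𝓝[>] (0:ℝ)) with h𝒰
  have hUle : (𝒰 : Filter ℝ) ≤ 𝓝[>] 0 := Ultrafilter.of_le _
  have hev : ∀ᶠ δ in (𝒰 : Filter ℝ), δ ∈ Ioc 0 δ0 := hUle (Ioc_mem_nhdsGT hδ0)
  obtain ⟨hKc, hKF⟩ := limit_cont 𝒰 Kf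
    (F := Metric.closedBall x (6 * (lam * r)) \ Metric.ball x (2 * (lam * r)))
    (hc6.diff isOpen_ball)
    (hev.mono fun δ hδ y hy => ⟨k1 δ hδ hy, k2 δ hδ hy⟩)
    (hev.mono fun δ hδ => k3 δ hδ) (hev.mono fun δ hδ => k4 δ hδ)
  set K := {y | ∀ O ∈ 𝓝 y, ∀ᶠ δ in (𝒰 : Filter ℝ), (Kf δ ∩ O).Nonempty} with hK
  have hBK : Metric.ball x r ⊆ Kᶜ := by
    intro y hy hyK
    exact (hKF hyK).2 (Metric.ball_subset_ball (by linarith) hy)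
  have hOK : (Metric.closedBall x R7)ᶜ ⊆ Kᶜ := by
    intro y hy hyK
    exact hy (Metric.closedBall_subset_closedBall (by linarith) (hKF hyK).1)
  refine ⟨K, hKc, ?_, ⟨hBK, hOK, ?_⟩, ?_⟩
  · intro y hy
    refine ⟨Metric.closedBall_subset_closedBall (by linarith) (hKF hy).1, ?_⟩
    rw [mul_assoc]
    exact (hKF hy).2
  · intro p hp p' hp' heq
    obtain ⟨C, hC, hCK, hpC, hp'C⟩ := llc_join hlam hLLC hKc.1.isClosed (hBK hp) (hOK hp') heq
    have hmiss := limit_miss 𝒰 Kf hC.1 (fun y hy h => hCK hy h)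
    obtain ⟨δ, h1, hδ⟩ := (hmiss.and hev).exists
    obtain ⟨z, hz, hz'⟩ := k5 δ hδ C hC.2.isPreconnected ⟨p, hpC, hp⟩ ⟨p', hp'C, hp'⟩
    exact h1 ⟨z, hz', hz⟩
  · refine iSup₂_le fun a ha => iSup₂_le fun b hb => ?_
    refine (limit_diam hsm 𝒰 hUle Kf _ (hev.mono fun δ hδ => k6 δ hδ) ha hb).trans ?_
    apply ENNReal.div_le_of_le_mul
    have e1 : μ (Metric.ball x (6 * (lam * r) + 2 * (lam * r))) ≤
        (CD : ℝ≥0∞) ^ (3 + ellOf lam) * (m * m) := by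
      rw [hmm]
      refine le_trans (measure_mono (Metric.ball_subset_ball ?_)) (dbl_iter hdbl x hr _)
      have := ell_le hlam
      have h2 : lam * r ≤ 2 ^ ellOf lam * r := mul_le_mul_of_nonneg_right this hr.le
      rw [pow_add]
      linarith
    calc 4 * (CD : ℝ≥0∞) ^ 2 * μ (Metric.ball x (6 * (lam * r) + 2 * (lam * r)))
        ≤ 4 * (CD : ℝ≥0∞) ^ 2 * ((CD : ℝ≥0∞) ^ (3 + ellOf lam) * (m * m)) :=
          mul_le_mul_right e1 _
      _ = 4 * (CD : ℝ≥0∞) ^ (5 + ellOf lam) * m * m := by ring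
      _ ≤ 4 * (CD : ℝ≥0∞) ^ (12 + 4 * ellOf lam) * m * m := by
          have := pow_le_pow_right₀ hCD (by omega : 5 + ellOf lam ≤ 12 + 4 * ellOf lam)
          gcongr
      _ = 4 * (CD : ℝ≥0∞) ^ (12 + 4 * ellOf lam) * m * (2 * (CW : ℝ≥0∞) * ENNReal.ofReal τ) := by
          rw [hτm]
      _ = _ := by ring

end
end

section
/- Let Ω ⊂ ℝ² be a circle domain whose complementary components are the closed disks D_i = D̄(z_i,r_i), i = 1,…,M, with all r_i > 0. Let i ≠ j and let N ≥ 2M−2 be an integer such that 2^{N+2} dist(D_i,D_j) ≤ min{r_i,r_j}. Then the conformal modulus of the family of paths joining D_i and D_j in Ω satisfies mod(D_i,D_j;Ω) ≥ (N−2M+2)·(2 log 2)/π. -/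
open Metric MeasureTheory Set Filter Topology UniformSpace ENNReal
open scoped NNReal

noncomputable section

lemma lli_aux (ρ : ℂ → ℝ≥0∞) (q : ℝ → ℂ) (K : ℝ≥0) (hq : LipschitzWith K q) (a l : ℝ) (hl : 0 ≤ l)
    (t : ℕ → ℝ) (n : ℕ) (ht : ∀ j < n, t j ≤ t (j + 1)) :
    t 0 ≤ t n ∧ ∑ j ∈ Finset.range n,
      (⨅ u ∈ Set.Icc (t j) (t (j + 1)), ρ (q (a + u * l))) *
        edist (q (a + t j * l)) (q (a + t (j + 1) * l)) ≤
      K * ∫⁻ θ in Set.Ioc (a + t 0 * l) (a + t n * l), ρ (q θ) := by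
  induction n with
  | zero => simp
  | succ n ih =>
    obtain ⟨h0, ih⟩ := ih (fun j hj => ht j (by omega))
    have hn := ht n (by omega)
    refine ⟨h0.trans hn, ?_⟩
    rw [Finset.sum_range_succ]
    have h1 : a + t 0 * l ≤ a + t n * l := by gcongr
    have h2 : a + t n * l ≤ a + t (n + 1) * l := by gcongr
    rw [← Set.Ioc_union_Ioc_eq_Ioc h1 h2, lintegral_union measurableSet_Ioc
      (Set.Ioc_disjoint_Ioc_of_le le_rfl), mul_add]
    refine add_le_add ih ?_
    set I := (⨅ u ∈ Set.Icc (t n) (t (n + 1)), ρ (q (a + u * l)))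
    have h3 : I * ENNReal.ofReal ((a + t (n + 1) * l) - (a + t n * l)) ≤
        ∫⁻ θ in Set.Ioc (a + t n * l) (a + t (n + 1) * l), ρ (q θ) := by
      rw [← Real.volume_Ioc, ← setLIntegral_const]
      refine setLIntegral_mono' measurableSet_Ioc fun θ hθ => ?_
      have hl' : 0 < l := by
        rcases hl.eq_or_lt with h | h
        · subst h; simp at hθ
        · exact h
      have h4 : a + ((θ - a) / l) * l = θ := by rw [div_mul_cancel₀ _ hl'.ne']; ring
      have : I ≤ ρ (q (a + ((θ - a) / l) * l)) := by
        refine iInf₂_le _ ⟨?_, ?_⟩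
        · rw [le_div_iff₀ hl']; linarith [hθ.1]
        · rw [div_le_iff₀ hl']; linarith [hθ.2]
      rwa [h4] at this
    calc I * edist (q (a + t n * l)) (q (a + t (n + 1) * l))
        ≤ I * (K * edist (a + t n * l) (a + t (n + 1) * l)) := by gcongr; exact hq _ _
      _ = K * (I * ENNReal.ofReal ((a + t (n + 1) * l) - (a + t n * l))) := by
          rw [edist_comm, edist_dist, Real.dist_eq, abs_of_nonneg (by linarith)]; ring
      _ ≤ _ := by gcongr

lemma arc_lemma (ρ : ℂ → ℝ≥0∞) (q : ℝ → ℂ) (K : ℝ≥0) (hq : LipschitzWith K q)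
    (A B G : Set ℂ) (hA : IsClosed A) (hB : IsClosed B) (hAB : Disjoint A B) (b : ℝ) (hb : 0 ≤ b)
    (h0 : q 0 ∈ A) (h1 : q b ∈ B) (hG : ∀ θ ∈ Set.Icc 0 b, q θ ∉ A → q θ ∉ B → q θ ∈ G)
    (hρ : IsAdmissible (joinPaths A B G) ρ) :
    1 ≤ K * ∫⁻ θ in Set.Ioo 0 b, ρ (q θ) := by
  have hc := hq.continuous
  obtain ⟨α, ⟨hα, hαA⟩, hαmax⟩ := (isCompact_Icc.inter_right (hA.preimage hc) :
    IsCompact (Set.Icc 0 b ∩ q ⁻¹' A)).exists_isGreatest ⟨0, ⟨le_rfl, hb⟩, h0⟩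
  obtain ⟨β, ⟨hβ, hβB⟩, hβmin⟩ := (isCompact_Icc.inter_right (hB.preimage hc) :
    IsCompact (Set.Icc α b ∩ q ⁻¹' B)).exists_isLeast ⟨b, ⟨hα.2, le_rfl⟩, h1⟩
  have hαβ : α < β := by
    refine lt_of_le_of_ne hβ.1 ?_
    rintro rfl
    exact Set.disjoint_left.1 hAB hαA hβB
  have hmid : ∀ θ ∈ Set.Ioo α β, q θ ∈ G := by
    intro θ hθ
    refine hG θ ⟨hα.1.trans hθ.1.le, hθ.2.le.trans hβ.2⟩ ?_ ?_
    · intro h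
      exact absurd (hαmax ⟨⟨hα.1.trans hθ.1.le, hθ.2.le.trans hβ.2⟩, h⟩) (not_le.2 hθ.1)
    · intro h
      exact absurd (hβmin ⟨⟨hθ.1.le, hθ.2.le.trans hβ.2⟩, h⟩) (not_le.2 hθ.2)
  have hcl : ∀ θ ∈ Set.Icc α β, q θ ∈ closure G := by
    intro θ hθ
    rw [← closure_Ioo hαβ.ne] at hθ
    exact map_mem_closure hc hθ hmid
  set γ : ℝ → ℂ := fun u => q (α + u * (β - α)) with hγ
  have hγL : LipschitzWith (K * Real.toNNReal (β - α)) γ := by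
    refine hq.comp (LipschitzWith.of_dist_le_mul fun x y => ?_)
    rw [Real.dist_eq, Real.dist_eq, Real.coe_toNNReal _ (by linarith),
      show α + x * (β - α) - (α + y * (β - α)) = (β - α) * (x - y) by ring, abs_mul,
      abs_of_pos (by linarith : 0 < β - α)]
  have hmem : γ ∈ joinPaths A B G := by
    refine ⟨hγL.continuous.continuousOn, by simpa [hγ] using hαA, by simpa [hγ] using hβB, ?_, ?_, ?_⟩
    · simpa [hγ] using hcl α ⟨le_rfl, hαβ.le⟩
    · simpa [hγ] using hcl β ⟨hαβ.le, le_rfl⟩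
    · intro u hu
      refine hmid _ ⟨?_, ?_⟩ <;> nlinarith [hu.1, hu.2]
  have hrec : LocRectifiableOn γ := by
    intro c d _ hcd _
    have := (hγL.lipschitzOnWith (s := Set.univ)).locallyBoundedVariationOn c d trivial trivial
    rw [Set.univ_inter] at this
    exact lt_top_iff_ne_top.2 this
  refine (hρ γ hmem hrec).trans ?_
  refine iSup_le fun c => iSup_le fun d => iSup_le fun hc0 => iSup_le fun hcd => iSup_le fun hd => ?_
  refine iSup_le fun n => iSup_le fun t => iSup_le fun ht0 => iSup_le fun htn => iSup_le fun ht => ?_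
  refine (lli_aux ρ q K hq α (β - α) (by linarith) t n ht).2.trans ?_
  gcongr
  rw [ht0, htn]
  intro θ hθ
  have := hβ.2
  have := hα.1
  exact ⟨by nlinarith [hθ.1], by nlinarith [hθ.2]⟩

lemma cs_aux (f : ℝ → ℝ≥0∞) (hf : Measurable f) (s : ℝ) (hs : 0 < s)
    (h : 1 ≤ ENNReal.ofReal s * ∫⁻ θ in Set.Ioo 0 Real.pi, f θ) :
    ENNReal.ofReal (1 / (Real.pi * s)) ≤
      ENNReal.ofReal s * ∫⁻ θ in Set.Ioo 0 Real.pi, f θ ^ 2 := by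
  have hpi := Real.pi_pos
  have hh := ENNReal.lintegral_mul_le_Lp_mul_Lq (volume.restrict (Set.Ioo 0 Real.pi))
    Real.HolderConjugate.two_two hf.aemeasurable (g := fun _ => 1) aemeasurable_const
  simp only [Pi.mul_apply, mul_one, ENNReal.one_rpow, lintegral_const, Measure.restrict_apply,
    MeasurableSet.univ, Set.univ_inter, Real.volume_Ioo, sub_zero, one_mul, ENNReal.rpow_two] at hh
  set J := ∫⁻ θ in Set.Ioo 0 Real.pi, f θ ^ 2
  have h2 : (∫⁻ θ in Set.Ioo 0 Real.pi, f θ) ^ 2 ≤ J * ENNReal.ofReal Real.pi := by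
    refine (pow_le_pow_left' hh 2).trans ?_
    rw [mul_pow, ← ENNReal.rpow_natCast, ← ENNReal.rpow_natCast, ← ENNReal.rpow_mul,
      ← ENNReal.rpow_mul]
    norm_num
  have h3 : 1 ≤ ENNReal.ofReal (Real.pi * s) * (ENNReal.ofReal s * J) := by
    calc (1 : ℝ≥0∞) = 1 ^ 2 := by simp
      _ ≤ (ENNReal.ofReal s * ∫⁻ θ in Set.Ioo 0 Real.pi, f θ) ^ 2 := pow_le_pow_left' h 2
      _ = ENNReal.ofReal s ^ 2 * (∫⁻ θ in Set.Ioo 0 Real.pi, f θ) ^ 2 := mul_pow _ _ _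
      _ ≤ ENNReal.ofReal s ^ 2 * (J * ENNReal.ofReal Real.pi) := by gcongr
      _ = _ := by rw [ENNReal.ofReal_mul hpi.le]; ring
  have hp : 0 < Real.pi * s := by positivity
  rw [one_div, ENNReal.ofReal_inv_of_pos hp]
  rw [ENNReal.inv_le_iff_le_mul]
  · exact h3
  · intro _; simpa using hp
  · intro h; exact absurd h ENNReal.ofReal_ne_top

lemma log_meas (a b : ℝ) (ha : 0 < a) (hab : a ≤ b) :
    ∫⁻ s in Set.Icc a b, ENNReal.ofReal (2 / (Real.pi * s)) =
      ENNReal.ofReal (2 / Real.pi * Real.log (b / a)) := by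
  have hb := ha.trans_le hab
  have hne : (0:ℝ) ∉ Set.uIcc a b := by
    rw [Set.uIcc_of_le hab]; intro h; linarith [h.1]
  rw [← integral_one_div_of_pos ha hb, ← intervalIntegral.integral_const_mul,
    intervalIntegral.integral_of_le hab, ← integral_Icc_eq_integral_Ioc,
    ofReal_integral_eq_lintegral_ofReal]
  · refine setLIntegral_congr_fun measurableSet_Icc fun s hs => ?_
    congr 1
    rw [div_mul_div_comm, mul_one]
  · rw [← IntegrableOn, ← intervalIntegrable_iff_integrableOn_Icc_of_le hab]
    exact (intervalIntegral.intervalIntegrable_one_div (fun x hx h => hne (h ▸ hx))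
      continuousOn_id).const_mul _
  · filter_upwards [ae_restrict_mem measurableSet_Icc] with s hs
    have : 0 < s := ha.trans_le hs.1
    simp only [Pi.zero_apply]
    positivity

lemma polar_lower (ρ : ℂ → ℝ≥0∞) (hρ : Measurable ρ) (p e : ℂ) (he : ‖e‖ = 1) (S : Set ℝ)
    (hS : MeasurableSet S) (hS0 : S ⊆ Set.Ioi 0)
    (h : ∀ s ∈ S, ∀ σ : ℝ, (σ = 1 ∨ σ = -1) → 1 ≤ ENNReal.ofReal s *
      ∫⁻ θ in Set.Ioo 0 Real.pi, ρ (p + e * (s * Complex.exp ((σ * θ : ℝ) * Complex.I)))) :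
    ∫⁻ s in S, ENNReal.ofReal (2 / (Real.pi * s)) ≤ ∫⁻ z, ρ z ^ 2 := by
  have hmp : MeasurePreserving (fun w : ℂ => p + e * w) volume volume := by
    have h1 := (rotation (⟨e, by simp [Submonoid.unitSphere, he]⟩ : Circle)).measurePreserving
    have h2 := measurePreserving_add_left (volume : Measure ℂ) p
    exact h2.comp h1
  have hρ2 : Measurable fun z => ρ z ^ 2 := hρ.pow_const 2
  rw [← hmp.lintegral_comp hρ2, ← Complex.lintegral_comp_polarCoord_symm, polarCoord_target,
    Measure.volume_eq_prod, ← Measure.prod_restrict, lintegral_prod]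
  rotate_left
  · refine Measurable.aemeasurable ?_
    simp only [Complex.polarCoord_symm_apply, smul_eq_mul]
    refine (by fun_prop : Measurable fun x : ℝ × ℝ => ENNReal.ofReal x.1).mul (hρ2.comp ?_)
    refine Continuous.measurable ?_
    fun_prop
  refine le_trans ?_ (lintegral_mono_set hS0)
  refine setLIntegral_mono' hS fun s hs => ?_
  have hs0 : 0 < s := hS0 hs
  have hpi := Real.pi_pos
  set g : ℝ → ℝ≥0∞ := fun θ => ρ (p + e * (s * Complex.exp ((θ : ℝ) * Complex.I))) with hg
  have hgm : Measurable g := hρ.comp (Continuous.measurable (by fun_prop))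
  have e1 : ∀ θ : ℝ, ENNReal.ofReal (s, θ).1 • ρ (p + e * Complex.polarCoord.symm (s, θ)) ^ 2 =
      ENNReal.ofReal s * g θ ^ 2 := by
    intro θ
    simp only [Complex.polarCoord_symm_apply, hg, smul_eq_mul]
    rw [Complex.exp_mul_I]
    push_cast
    rfl
  simp_rw [e1]
  rw [lintegral_const_mul _ (hgm.pow_const 2)]
  have hp := cs_aux g hgm s hs0 (by simpa [hg] using h s hs 1 (Or.inl rfl))
  have hm := cs_aux (fun θ => g (-θ)) (hgm.comp measurable_neg) s hs0
    (by simpa [hg] using h s hs (-1) (Or.inr rfl))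
  have e2 : ∫⁻ θ in Set.Ioo 0 Real.pi, g (-θ) ^ 2 = ∫⁻ θ in Set.Ioo (-Real.pi) 0, g θ ^ 2 := by
    have := (Measure.measurePreserving_neg (volume : Measure ℝ)).setLIntegral_comp_preimage
      (s := Set.Ioo (-Real.pi) 0) measurableSet_Ioo (hgm.pow_const 2)
    rw [← this]
    simp
  rw [e2] at hm
  calc ENNReal.ofReal (2 / (Real.pi * s))
      = ENNReal.ofReal (1 / (Real.pi * s)) + ENNReal.ofReal (1 / (Real.pi * s)) := by
        rw [← ENNReal.ofReal_add (by positivity) (by positivity)]; congr 1; ring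
    _ ≤ _ := add_le_add hm hp
    _ = ENNReal.ofReal s * ∫⁻ θ in Set.Ioo (-Real.pi) 0 ∪ Set.Ioo 0 Real.pi, g θ ^ 2 := by
        rw [lintegral_union measurableSet_Ioo, mul_add]
        rw [Set.disjoint_left]
        intro x hx hx'
        linarith [hx.2, hx'.1]
    _ ≤ _ := by
        gcongr
        refine Set.union_subset ?_ ?_
        · exact Set.Ioo_subset_Ioo_right hpi.le
        · exact Set.Ioo_subset_Ioo_left (by linarith)

/-- Key geometric estimate. -/
lemma disk_aux (R d ρ s : ℝ) (w : ℂ) (ri rj : ℝ) (hρ : 0 < ρ) (hd : 0 < d)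
    (hRi : R ≤ ri) (hRj : R ≤ rj) (hdR : 16 * d ≤ R) (hs : d ≤ s) (hsR : 16 * s ≤ R)
    (h1 : ρ + ri < ‖w - ((ri + d / 2 : ℝ) : ℂ)‖) (h2 : ρ + rj < ‖w + ((rj + d / 2 : ℝ) : ℂ)‖)
    (hu : ‖w‖ - ρ ≤ s) (hv : s ≤ ‖w‖ + ρ) :
    s ∈ Set.Icc (max (‖w‖ - ρ) d) (4 * max (‖w‖ - ρ) d) := by
  refine ⟨max_le hu hs, ?_⟩
  have h1' : ρ + R < ‖w - ((R + d / 2 : ℝ) : ℂ)‖ := by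
    have := norm_add_le (w - ((R + d / 2 : ℝ) : ℂ)) (((R - ri : ℝ)) : ℂ)
    rw [Complex.norm_real, Real.norm_eq_abs, abs_of_nonpos (by linarith)] at this
    rw [show w - ((R + d / 2 : ℝ) : ℂ) + ((R - ri : ℝ) : ℂ) = w - ((ri + d / 2 : ℝ) : ℂ) by
      push_cast; ring] at this
    linarith
  have h2' : ρ + R < ‖w + ((R + d / 2 : ℝ) : ℂ)‖ := by
    have := norm_add_le (w + ((R + d / 2 : ℝ) : ℂ)) (((rj - R : ℝ)) : ℂ)
    rw [Complex.norm_real, Real.norm_eq_abs, abs_of_nonneg (by linarith)] at this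
    rw [show w + ((R + d / 2 : ℝ) : ℂ) + ((rj - R : ℝ) : ℂ) = w + ((rj + d / 2 : ℝ) : ℂ) by
      push_cast; ring] at this
    linarith
  have hpar := parallelogram_law_with_norm ℝ w ((R + d / 2 : ℝ) : ℂ)
  rw [Complex.norm_real, Real.norm_eq_abs, abs_of_nonneg (by linarith : 0 ≤ R + d / 2)] at hpar
  have hw := norm_nonneg w
  set m := ‖w‖
  have hkey : (ρ + R) ^ 2 < m ^ 2 + (R + d / 2) ^ 2 := by nlinarith
  set T := max (m - ρ) d
  have hT1 : m - ρ ≤ T := le_max_left _ _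
  have hT2 : d ≤ T := le_max_right _ _
  have hT3 : T ≤ s := max_le hu hs
  refine hv.trans ?_
  by_contra hcon
  push Not at hcon
  have hu0 : (m - ρ) * (m + ρ) ≤ T * (m + ρ) := by gcongr
  have hTv : T * (m + ρ) ≤ R / 16 * (m + ρ) := by gcongr; linarith
  nlinarith [mul_pos hd (hd.trans_le hT2)]

lemma q_lip (p e : ℂ) (he : ‖e‖ = 1) (s : ℝ) (hs : 0 ≤ s) (σ : ℝ) (hσ : σ = 1 ∨ σ = -1) :
    LipschitzWith (Real.toNNReal s)
      (fun θ : ℝ => p + e * (s * Complex.exp ((σ * θ : ℝ) * Complex.I))) := by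
  refine LipschitzWith.of_dist_le_mul fun x y => ?_
  rw [Real.coe_toNNReal _ hs, dist_eq_norm, Real.dist_eq]
  have h1 : p + e * (s * Complex.exp ((σ * x : ℝ) * Complex.I)) -
      (p + e * (s * Complex.exp ((σ * y : ℝ) * Complex.I))) =
      e * (s * (Complex.exp ((σ * y : ℝ) * Complex.I) *
        (Complex.exp (Complex.I * (σ * (x - y) : ℝ)) - 1))) := by
    have : Complex.exp ((σ * x : ℝ) * Complex.I) = Complex.exp ((σ * y : ℝ) * Complex.I) *
        Complex.exp (Complex.I * (σ * (x - y) : ℝ)) := by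
      rw [← Complex.exp_add]; congr 1; push_cast; ring
    rw [this]; ring
  rw [h1, norm_mul, norm_mul, norm_mul, he, one_mul, Complex.norm_exp_ofReal_mul_I, one_mul,
    Complex.norm_real, Real.norm_eq_abs, abs_of_nonneg hs]
  refine mul_le_mul_of_nonneg_left ((Real.norm_exp_I_mul_ofReal_sub_one_le).trans ?_) hs
  rw [Real.norm_eq_abs, abs_mul]
  rcases hσ with h | h <;> simp [h]

theorem statement15 (M : ℕ) (hM : 0 < M) (z : Fin M → ℂ) (r : Fin M → ℝ)
    (hr : ∀ i, 0 < r i)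
    (hdisj : Pairwise fun i j =>
      Disjoint (Metric.closedBall (z i) (r i)) (Metric.closedBall (z j) (r j)))
    (Ω : Set ℂ) (hΩ : Ω = (⋃ i, Metric.closedBall (z i) (r i))ᶜ)
    (i j : Fin M) (hij : i ≠ j) (N : ℕ) (hN : 2 * M ≤ N + 2)
    (hclose : (2 : ℝ) ^ (N + 2) *
        setSetDist (Metric.closedBall (z i) (r i)) (Metric.closedBall (z j) (r j)) ≤
      min (r i) (r j)) :
    ENNReal.ofReal (((N : ℝ) - 2 * M + 2) * (2 * Real.log 2) / Real.pi) ≤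
      modulusC (joinPaths (Metric.closedBall (z i) (r i))
        (Metric.closedBall (z j) (r j)) Ω) := by
  have hpi := Real.pi_pos
  have hl2 : 0 < Real.log 2 := Real.log_pos (by norm_num)
  have hri := hr i
  have hrj := hr j
  have hDij := (disjoint_closedBall_closedBall_iff hri.le hrj.le).1 (hdisj hij)
  have hM2 : 2 ≤ M := by
    by_contra h
    have h1 : M = 1 := by omega
    subst h1
    exact hij (Subsingleton.elim _ _)
  have hN2 : 2 ≤ N := by omega
  obtain ⟨d, hd⟩ : ∃ d, d = dist (z i) (z j) - r i - r j := ⟨_, rfl⟩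
  have hd0 : 0 < d := by linarith
  have hdle : d ≤ setSetDist (Metric.closedBall (z i) (r i)) (Metric.closedBall (z j) (r j)) := by
    refine le_csInf ⟨_, Set.mem_image2_of_mem (Metric.mem_closedBall_self hri.le)
      (Metric.mem_closedBall_self hrj.le)⟩ ?_
    rintro _ ⟨a, ha, b, hb, rfl⟩
    have h1 := dist_triangle4 (z i) a b (z j)
    rw [Metric.mem_closedBall, dist_comm] at ha
    rw [Metric.mem_closedBall] at hb
    linarith
  obtain ⟨R, hR⟩ : ∃ R, R = min (r i) (r j) := ⟨_, rfl⟩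
  have hRi : R ≤ r i := hR ▸ min_le_left _ _
  have hRj : R ≤ r j := hR ▸ min_le_right _ _
  obtain ⟨n, rfl⟩ : ∃ n, N = n + 2 := ⟨N - 2, by omega⟩
  have hdR : (2 : ℝ) ^ n * 16 * d ≤ R := by
    rw [hR]
    refine le_trans ?_ hclose
    rw [show (2 : ℝ) ^ (n + 2 + 2) = 2 ^ n * 16 by ring]
    gcongr
  have h2n : (1 : ℝ) ≤ 2 ^ n := one_le_pow₀ (by norm_num)
  have hdR' : 16 * d ≤ R := by nlinarith
  set D := dist (z i) (z j) with hD
  have hD0 : 0 < D := by linarith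
  obtain ⟨e, he'⟩ : ∃ e : ℂ, e = (z i - z j) / (D : ℂ) := ⟨_, rfl⟩
  have hDC : (D : ℂ) ≠ 0 := by exact_mod_cast hD0.ne'
  have he : ‖e‖ = 1 := by
    rw [he', norm_div, Complex.norm_real, Real.norm_eq_abs, abs_of_pos hD0, ← dist_eq_norm,
      ← hD, div_self hD0.ne']
  have heD : e * D = z i - z j := by rw [he']; field_simp
  have he0 : e ≠ 0 := by rw [← norm_ne_zero_iff, he]; norm_num
  obtain ⟨p, hp⟩ : ∃ p : ℂ, p = z i - e * ((r i + d / 2 : ℝ) : ℂ) := ⟨_, rfl⟩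
  have hzi : z i = p + e * ((r i + d / 2 : ℝ) : ℂ) := by rw [hp]; ring
  have hzj : z j = p - e * ((r j + d / 2 : ℝ) : ℂ) := by
    have h1 : (D : ℂ) = ((r i + d / 2 : ℝ) : ℂ) + ((r j + d / 2 : ℝ) : ℂ) := by
      rw [← Complex.ofReal_add]; congr 1; linarith
    have h2 : z j = z i - e * D := by rw [heD]; ring
    rw [h2, hzi, h1]; ring
  -- coordinates of centers
  set w : Fin M → ℂ := fun k => (z k - p) / e with hw
  have hzw : ∀ k, z k = p + e * w k := by
    intro k; simp only [hw]; field_simp; ring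
  set T : Fin M → ℝ := fun k => max (‖w k‖ - r k) d with hT
  set I : Finset (Fin M) := (Finset.univ.erase i).erase j with hI
  have hIcard : I.card = M - 2 := by
    rw [hI, Finset.card_erase_of_mem (by simp [hij.symm]), Finset.card_erase_of_mem (by simp)]
    simp; omega
  set S : Set ℝ := Set.Icc d (2 ^ n * d) \ ⋃ k ∈ I, Set.Icc (T k) (4 * T k) with hS
  have hSm : MeasurableSet S :=
    measurableSet_Icc.diff (Finset.measurableSet_biUnion _ fun k _ => measurableSet_Icc)
  -- measure of good set
  have hmeas : ENNReal.ofReal ((((n + 2 : ℕ) : ℝ) - 2 * M + 2) * (2 * Real.log 2) / Real.pi) ≤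
      ∫⁻ s in S, ENNReal.ofReal (2 / (Real.pi * s)) := by
    set f : ℝ → ℝ≥0∞ := fun s => ENNReal.ofReal (2 / (Real.pi * s)) with hf
    set ν := (volume : Measure ℝ).withDensity f with hν
    have hνI : ∀ a b : ℝ, 0 < a → a ≤ b →
        ν (Set.Icc a b) = ENNReal.ofReal (2 / Real.pi * Real.log (b / a)) := by
      intro a b ha hab
      rw [hν, withDensity_apply _ measurableSet_Icc, log_meas a b ha hab]
    rw [← withDensity_apply _ hSm, ← hν]
    have h1 : ν (Set.Icc d (2 ^ n * d)) = ENNReal.ofReal (2 / Real.pi * (n * Real.log 2)) := by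
      rw [hνI _ _ hd0 (by nlinarith), mul_div_assoc, div_self hd0.ne', mul_one, Real.log_pow]
    have h2 : ν (⋃ k ∈ I, Set.Icc (T k) (4 * T k)) ≤
        ENNReal.ofReal ((M - 2 : ℕ) * (2 / Real.pi * (2 * Real.log 2))) := by
      refine (measure_biUnion_finset_le _ _).trans ?_
      have : ∀ k ∈ I, ν (Set.Icc (T k) (4 * T k)) =
          ENNReal.ofReal (2 / Real.pi * (2 * Real.log 2)) := by
        intro k _
        have hTk : 0 < T k := hd0.trans_le (le_max_right _ _)
        rw [hνI _ _ hTk (by linarith), mul_div_assoc, div_self hTk.ne', mul_one,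
          show (4 : ℝ) = 2 ^ 2 by norm_num, Real.log_pow]
        norm_num
      rw [Finset.sum_congr rfl this, Finset.sum_const, hIcard, nsmul_eq_mul,
        ENNReal.ofReal_mul (p := ((M - 2 : ℕ) : ℝ)) (by positivity), ENNReal.ofReal_natCast]
    have h3 : ν (Set.Icc d (2 ^ n * d)) - ν (⋃ k ∈ I, Set.Icc (T k) (4 * T k)) ≤ ν S :=
      le_measure_sdiff
    refine le_trans ?_ h3
    refine le_trans ?_ (tsub_le_tsub_left h2 _)
    rw [h1, ← ENNReal.ofReal_sub _ (by positivity)]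
    refine ENNReal.ofReal_le_ofReal (le_of_eq ?_)
    rw [Nat.cast_sub hM2]
    push_cast
    ring
  refine hmeas.trans ?_
  refine le_iInf fun ρ => le_iInf fun hρm => le_iInf fun hρ => ?_
  refine polar_lower ρ hρm p e he S hSm (fun s hs => hd0.trans_le hs.1.1) ?_
  intro s hs σ hσ
  have hsd : d ≤ s := hs.1.1
  have hs0 : 0 < s := hd0.trans_le hsd
  have hsR : 16 * s ≤ R := by linarith [hs.1.2]
  have hlip := q_lip p e he s hs0.le σ hσ
  have := arc_lemma ρ _ _ hlip _ _ Ω Metric.isClosed_closedBall Metric.isClosed_closedBall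
    (hdisj hij) Real.pi hpi.le ?_ ?_ ?_ hρ
  · exact this
  · rw [Metric.mem_closedBall, dist_eq_norm, hzi]
    have : p + e * (s * Complex.exp ((σ * 0 : ℝ) * Complex.I)) -
        (p + e * ((r i + d / 2 : ℝ) : ℂ)) = e * ((s - (r i + d / 2) : ℝ) : ℂ) := by
      simp; ring
    rw [this, norm_mul, he, one_mul, Complex.norm_real, Real.norm_eq_abs, abs_le]
    constructor <;> linarith
  · rw [Metric.mem_closedBall, dist_eq_norm, hzj]
    have hexp : Complex.exp ((σ * Real.pi : ℝ) * Complex.I) = -1 := by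
      rcases hσ with h | h
      · simp [h]
      · simp [h, Complex.exp_neg]
    have : p + e * (s * Complex.exp ((σ * Real.pi : ℝ) * Complex.I)) -
        (p - e * ((r j + d / 2 : ℝ) : ℂ)) = e * ((-s + (r j + d / 2) : ℝ) : ℂ) := by
      rw [hexp]; push_cast; ring
    rw [this, norm_mul, he, one_mul, Complex.norm_real, Real.norm_eq_abs, abs_le]
    constructor <;> linarith
  · intro θ _ hAi hBj
    rw [hΩ, Set.mem_compl_iff, Set.mem_iUnion]
    rintro ⟨k, hk⟩
    by_cases hki : k = i
    · exact hAi (hki ▸ hk)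
    by_cases hkj : k = j
    · exact hBj (hkj ▸ hk)
    refine hs.2 (Set.mem_biUnion (x := k) (by simp [hI, hki, hkj]) ?_)
    have hki' := (disjoint_closedBall_closedBall_iff (hr k).le hri.le).1 (hdisj hki)
    have hkj' := (disjoint_closedBall_closedBall_iff (hr k).le hrj.le).1 (hdisj hkj)
    rw [dist_eq_norm, hzw k] at hki' hkj'
    rw [hzi, show p + e * w k - (p + e * ((r i + d / 2 : ℝ) : ℂ)) =
      e * (w k - ((r i + d / 2 : ℝ) : ℂ)) by ring, norm_mul, he, one_mul] at hki'
    rw [hzj, show p + e * w k - (p - e * ((r j + d / 2 : ℝ) : ℂ)) =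
      e * (w k + ((r j + d / 2 : ℝ) : ℂ)) by ring, norm_mul, he, one_mul] at hkj'
    rw [Metric.mem_closedBall, dist_eq_norm, hzw k] at hk
    rw [show ∀ x : ℂ, p + e * x - (p + e * w k) = e * (x - w k) from fun x => by ring,
      norm_mul, he, one_mul] at hk
    have hn : ‖(s : ℂ) * Complex.exp ((σ * θ : ℝ) * Complex.I)‖ = s := by
      rw [norm_mul, Complex.norm_exp_ofReal_mul_I, mul_one, Complex.norm_real, Real.norm_eq_abs,
        abs_of_pos hs0]
    have hab := abs_le.1 ((abs_norm_sub_norm_le _ _).trans hk)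
    rw [hn] at hab
    exact disk_aux R d (r k) s (w k) (r i) (r j) (hr k) hd0 hRi hRj hdR' hsd hsR hki' hkj'
      (by linarith [hab.1]) (by linarith [hab.2])


end
end
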